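/- arXiv:2206.11638 — 3 statements merged into one kernel-verified Lean document; each statement's English description precedes it below -/
import Mathlib

section
/- Fix an integer k ≥ 1. Let a : Fin k → ℂ satisfy Im(a j) ≥ 0 for all j, and assume k·(a j) ∈ ℤ for at least one j. Let x : Fin k → ℝ with x j ≥ 0 for all j. Then there exists F : ℂ → ℂ, analytic on ℂ \ {1}, such that F(s) = ζ_k(a, x, s) = Σ_{n=1}^∞ exp(2πi·n·a_{ι(n)}) · (n + x_{ι(n)})^{−s} for every s with Re s > 1, and (s − 1)·F(s) → (1/k)·Σ_{j ∈ Fin k, k·(a j) ∈ ℤ} exp(2πi·(j+1)·(a j)) as s → 1 along s ≠ 1. In other words, ζ_k(a, x, ·) extends meromorphically to ℂ with at worst a simple pole at s = 1 of residue (1/k)·Σ_{a_j ∈ ℤ[1/k]} e^{2πi j a_j} (with j the 1-based index). -/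
namespace LerchAux

lemma hasSum_congr_aux {f g : ℕ → ℂ} {w : ℂ} (h : ∀ m, f m = g m) : HasSum f w ↔ HasSum g w := by
  rw [funext h]

/-- `N`-th forward difference (in `t`) of `t ↦ t ^ (-s)`. -/
noncomputable def D : ℕ → ℂ → ℝ → ℂ
  | 0, s, t => (t : ℂ) ^ (-s)
  | N + 1, s, t => D N s (t + 1) - D N s t

lemma hasDerivAt_D (N : ℕ) : ∀ (s : ℂ) (t : ℝ), 0 < t →
    HasDerivAt (D N s) (-s * D N (s + 1) t) t := by
  induction N with
  | zero =>
    intro s t ht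
    by_cases hs : s = 0
    · subst hs
      have : D 0 0 = fun _ => (1 : ℂ) := by
        funext t; simp [D]
      rw [this]
      simpa using hasDerivAt_const t (1 : ℂ)
    · have h := hasDerivAt_ofReal_cpow_const (x := t) ht.ne' (r := -s) (neg_ne_zero.mpr hs)
      have e : -s * D 0 (s + 1) t = -s * (t : ℂ) ^ (-s - 1) := by
        simp only [D]; congr 2; ring
      rw [e]
      exact h
  | succ N ih =>
    intro s t ht
    have h1 := (ih s (t + 1) (by linarith)).comp_add_const t 1
    have h2 := ih s t ht
    have h := h1.sub h2
    have e : -s * D (N + 1) (s + 1) t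
        = -s * D N (s + 1) (t + 1) - -s * D N (s + 1) t := by
      simp only [D]; ring
    rw [e]
    exact h

lemma differentiable_D (N : ℕ) : ∀ (t : ℝ), 0 < t → Differentiable ℂ (fun s => D N s t) := by
  induction N with
  | zero =>
    intro t ht s
    have : (t : ℂ) ≠ 0 := by exact_mod_cast ht.ne'
    exact (differentiableAt_id.neg).const_cpow (Or.inl this)
  | succ N ih =>
    intro t ht
    exact (ih (t + 1) (by linarith)).sub (ih t ht)

lemma norm_D_le (N : ℕ) : ∀ (s : ℂ) (t : ℝ), 0 < t → 0 ≤ s.re + N →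
    ‖D N s t‖ ≤ (‖s‖ + N) ^ N * t ^ (-(s.re + N)) := by
  induction N with
  | zero =>
    intro s t ht _
    simp [D, Complex.norm_cpow_eq_rpow_re_of_pos ht]
  | succ N ih =>
    intro s t ht hs
    push_cast at hs
    have hb : ∀ u ∈ Set.Icc t (t + 1), ‖-s * D N (s + 1) u‖ ≤
        (‖s‖ + (N + 1 : ℕ)) ^ (N + 1) * t ^ (-(s.re + (N + 1 : ℕ))) := by
      intro u hu
      have hu0 : 0 < u := lt_of_lt_of_le ht hu.1
      have h1 := ih (s + 1) u hu0 (by simp; linarith)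
      have h2 : u ^ (-((s + 1).re + N)) ≤ t ^ (-(s.re + (N + 1 : ℕ))) := by
        have : -((s + 1).re + (N : ℝ)) = -(s.re + (N + 1 : ℕ)) := by
          simp; ring
        rw [this]
        exact Real.rpow_le_rpow_of_nonpos ht hu.1 (by push_cast; linarith)
      have h3 : ‖s + 1‖ + N ≤ ‖s‖ + (N + 1 : ℕ) := by
        have := norm_add_le s 1
        simp at this ⊢; linarith
      rw [norm_mul, norm_neg, pow_succ']
      have h4 : ‖s‖ ≤ ‖s‖ + (N + 1 : ℕ) := by
        have : (0 : ℝ) ≤ ((N + 1 : ℕ) : ℝ) := by positivity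
        linarith
      calc ‖s‖ * ‖D N (s + 1) u‖
          ≤ (‖s‖ + (N + 1 : ℕ)) * ((‖s + 1‖ + N) ^ N * u ^ (-((s + 1).re + N))) := by gcongr
        _ ≤ (‖s‖ + (N + 1 : ℕ)) * ((‖s‖ + (N + 1 : ℕ)) ^ N *
              t ^ (-(s.re + (N + 1 : ℕ)))) := by gcongr
        _ = _ := by ring
    have := Convex.norm_image_sub_le_of_norm_hasDerivWithin_le (f := D N s)
      (f' := fun u => -s * D N (s + 1) u) (s := Set.Icc t (t + 1)) (x := t) (y := t + 1)
      (fun u hu => (hasDerivAt_D N s u (lt_of_lt_of_le ht hu.1)).hasDerivWithinAt) hb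
      (convex_Icc _ _) (by simp) (by simp)
    simpa [D] using this

lemma summable_aux (c : ℝ) (hc : 1 ≤ c) (p : ℝ) (hp : 1 < p) :
    Summable (fun m : ℕ => ((m : ℝ) + c) ^ (-p)) := by
  refine ((Real.summable_one_div_nat_add_rpow c p).mpr hp).congr fun m => ?_
  have : 0 ≤ (m : ℝ) + c := by positivity
  rw [abs_of_nonneg this, Real.rpow_neg this, one_div]

/-- The series of `N`-th differences. -/
noncomputable def G (z : ℂ) (c : ℝ) (N : ℕ) (s : ℂ) : ℂ := ∑' m : ℕ, z ^ m * D N s (m + c)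

lemma term_le {z : ℂ} (hz : ‖z‖ ≤ 1) {c : ℝ} (hc : 1 ≤ c) (N : ℕ) {p R : ℝ} (hp : 1 < p)
    {s : ℂ} (hs : p - N < s.re) (hR : ‖s‖ < R) (m : ℕ) :
    ‖z ^ m * D N s (m + c)‖ ≤ (R + N) ^ N * ((m : ℝ) + c) ^ (-p) := by
  have h1 : 1 ≤ (m : ℝ) + c := by
    have : (0 : ℝ) ≤ m := by positivity
    linarith
  have h2 := norm_D_le N s (m + c) (by linarith) (by linarith)
  rw [norm_mul, norm_pow]
  have h3 : ‖z‖ ^ m ≤ 1 := pow_le_one₀ (norm_nonneg _) hz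
  calc ‖z‖ ^ m * ‖D N s (m + c)‖ ≤ 1 * ((‖s‖ + N) ^ N * ((m : ℝ) + c) ^ (-(s.re + N))) := by
        gcongr
    _ = (‖s‖ + N) ^ N * ((m : ℝ) + c) ^ (-(s.re + N)) := one_mul _
    _ ≤ _ := by
        gcongr
        · have : 0 ≤ R := (norm_nonneg s).trans hR.le
          positivity
        · linarith

lemma summable_term {z : ℂ} (hz : ‖z‖ ≤ 1) {c : ℝ} (hc : 1 ≤ c) (N : ℕ)
    {s : ℂ} (hs : 1 - N < s.re) : Summable (fun m : ℕ => z ^ m * D N s (m + c)) := by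
  obtain ⟨p, hp1, hp2⟩ := exists_between (show 1 < s.re + N by linarith)
  exact Summable.of_norm_bounded ((summable_aux c hc p hp1).mul_left ((‖s‖ + 1 + N) ^ N))
    (fun m => term_le hz hc N hp1 (by linarith) (lt_add_one _) m)

lemma differentiableAt_G {z : ℂ} (hz : ‖z‖ ≤ 1) {c : ℝ} (hc : 1 ≤ c) (N : ℕ)
    {s : ℂ} (hs : 1 - N < s.re) : DifferentiableAt ℂ (G z c N) s := by
  obtain ⟨p, hp1, hp2⟩ := exists_between (show 1 < s.re + N by linarith)
  have hU : IsOpen ({w : ℂ | p - N < w.re} ∩ {w : ℂ | ‖w‖ < ‖s‖ + 1}) :=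
    (isOpen_lt continuous_const Complex.continuous_re).inter
      (isOpen_lt continuous_norm continuous_const)
  have h := Complex.differentiableOn_tsum_of_summable_norm
    (F := fun (m : ℕ) (w : ℂ) => z ^ m * D N w (m + c))
    ((summable_aux c hc p hp1).mul_left ((‖s‖ + 1 + N) ^ N))
    (fun m => (((differentiable_D N (m + c) (by positivity)).const_mul _).differentiableOn)) hU
    (fun m w hw => term_le hz hc N hp1 hw.1 hw.2 m)
  exact h.differentiableAt (hU.mem_nhds ⟨by simp; linarith, by simp⟩)

lemma G_step {z : ℂ} (hz : ‖z‖ ≤ 1) {c : ℝ} (hc : 1 ≤ c) (N : ℕ)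
    {s : ℂ} (hs : 1 - N < s.re) :
    (1 - z) * G z c N s = D N s c + z * G z c (N + 1) s := by
  have h0 := summable_term hz hc N hs
  have h1 := summable_term hz hc (N + 1) (s := s) (by push_cast; linarith)
  have e1 : G z c N s = D N s c + ∑' m : ℕ, z ^ (m + 1) * D N s ((m + 1 : ℕ) + c) := by
    unfold G
    rw [h0.tsum_eq_zero_add]
    simp
  have h0' : Summable (fun m : ℕ => z ^ (m + 1) * D N s ((m + 1 : ℕ) + c)) :=
    (summable_nat_add_iff 1).mpr h0
  have e2 : z * G z c (N + 1) s
      = ∑' m : ℕ, z ^ (m + 1) * D N s ((m + 1 : ℕ) + c) - z * G z c N s := by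
    unfold G
    rw [← tsum_mul_left, ← tsum_mul_left, ← h0'.tsum_sub (h0.mul_left z)]
    refine tsum_congr fun m => ?_
    have : ((m + 1 : ℕ) : ℝ) + c = m + c + 1 := by push_cast; ring
    rw [this]
    simp only [D]; ring
  rw [e2]
  linear_combination e1

/-- `N`-th stage of the continuation. -/
noncomputable def E (z : ℂ) (c : ℝ) (N : ℕ) (s : ℂ) : ℂ :=
  ∑ i ∈ Finset.range N, z ^ i / (1 - z) ^ (i + 1) * D i s c + z ^ N / (1 - z) ^ N * G z c N s

lemma E_succ {z : ℂ} (hz : ‖z‖ ≤ 1) (hz1 : z ≠ 1) {c : ℝ} (hc : 1 ≤ c) (N : ℕ)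
    {s : ℂ} (hs : 1 - N < s.re) : E z c (N + 1) s = E z c N s := by
  have h := G_step hz hc N hs
  have h1 : 1 - z ≠ 0 := sub_ne_zero.mpr hz1.symm
  have hG : G z c N s = (D N s c + z * G z c (N + 1) s) / (1 - z) := by
    rw [eq_div_iff h1, ← h]; ring
  unfold E
  rw [Finset.sum_range_succ, hG]
  field_simp
  ring

lemma E_le {z : ℂ} (hz : ‖z‖ ≤ 1) (hz1 : z ≠ 1) {c : ℝ} (hc : 1 ≤ c) {N M : ℕ} (hNM : N ≤ M)
    {s : ℂ} (hs : 1 - N < s.re) : E z c M s = E z c N s := by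
  induction M, hNM using Nat.le_induction with
  | base => rfl
  | succ M hM ih =>
    rw [E_succ hz hz1 hc M, ih]
    have : (N : ℝ) ≤ M := by exact_mod_cast hM
    linarith

lemma differentiableAt_E {z : ℂ} (hz : ‖z‖ ≤ 1) {c : ℝ} (hc : 1 ≤ c) (N : ℕ)
    {s : ℂ} (hs : 1 - N < s.re) : DifferentiableAt ℂ (E z c N) s := by
  unfold E
  refine DifferentiableAt.add ?_ ((differentiableAt_G hz hc N hs).const_mul _)
  refine DifferentiableAt.fun_sum fun i _ => ?_
  exact ((differentiable_D i c (by linarith)) s).const_mul _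

/-- Lerch series with parameters `z, c` continues with `(s-1) F(s) → r`. -/
def P (z : ℂ) (c : ℝ) (r : ℂ) : Prop :=
  ∃ F : ℂ → ℂ, (∀ s, s ≠ 1 → DifferentiableAt ℂ F s) ∧
    (∀ s : ℂ, 1 < s.re → HasSum (fun m : ℕ => z ^ m * ((m + c : ℝ) : ℂ) ^ (-s)) (F s)) ∧
    Filter.Tendsto (fun s : ℂ => (s - 1) * F s) (nhdsWithin 1 {(1 : ℂ)}ᶜ) (nhds r)

lemma tendsto_zero {F : ℂ → ℂ} (hF : ContinuousAt F 1) :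
    Filter.Tendsto (fun s : ℂ => (s - 1) * F s) (nhdsWithin 1 {(1 : ℂ)}ᶜ) (nhds 0) := by
  have h : ContinuousAt (fun s : ℂ => (s - 1) * F s) 1 := by fun_prop
  have := h.tendsto
  simp only [sub_self, zero_mul] at this
  exact this.mono_left nhdsWithin_le_nhds

lemma P_ne_one {z : ℂ} (hz : ‖z‖ ≤ 1) (hz1 : z ≠ 1) {c : ℝ} (hc : 1 ≤ c) : P z c 0 := by
  let Nn : ℂ → ℕ := fun s => ⌈1 - s.re⌉₊ + 1
  have hN : ∀ s, 1 - (Nn s : ℝ) < s.re := by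
    intro s
    have := Nat.le_ceil (1 - s.re)
    simp only [Nn]; push_cast; linarith
  let F : ℂ → ℂ := fun s => E z c (Nn s) s
  have hFE : ∀ (M : ℕ) (s : ℂ), 1 - (M : ℝ) < s.re → F s = E z c M s := by
    intro M s hs
    rcases le_total M (Nn s) with h | h
    · exact E_le hz hz1 hc h hs
    · exact (E_le hz hz1 hc h (hN s)).symm
  have hd : Differentiable ℂ F := by
    intro s
    refine (differentiableAt_E hz hc (Nn s) (hN s)).congr_of_eventuallyEq ?_
    have : {w : ℂ | 1 - (Nn s : ℝ) < w.re} ∈ nhds s :=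
      (isOpen_lt continuous_const Complex.continuous_re).mem_nhds (hN s)
    filter_upwards [this] with w hw using hFE _ _ hw
  refine ⟨F, fun s _ => hd s, fun s hs => ?_, tendsto_zero (hd 1).continuousAt⟩
  have h0 : 1 - ((0 : ℕ) : ℝ) < s.re := by simpa using hs
  rw [hFE 0 s h0]
  have := (summable_term hz hc 0 h0).hasSum
  simpa [E, G, D] using this

lemma P_of_succ {z : ℂ} {c : ℝ} (hc : 0 < c) {r : ℂ} (h : P z (c + 1) r) : P z c (z * r) := by
  obtain ⟨F, hd, hs, ht⟩ := h
  have hc' : (c : ℂ) ≠ 0 := by exact_mod_cast hc.ne'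
  have hd0 : Differentiable ℂ (fun s : ℂ => (c : ℂ) ^ (-s)) := differentiable_D 0 c hc
  refine ⟨fun s => (c : ℂ) ^ (-s) + z * F s, fun s h1 => ?_, fun s h1 => ?_, ?_⟩
  · exact (hd0 s).add ((hd s h1).const_mul z)
  · have h2 := (hs s h1).mul_left z
    have := HasSum.zero_add (f := fun m : ℕ => z ^ m * ((m + c : ℝ) : ℂ) ^ (-s))
      (m := z * F s) (by
        refine (LerchAux.hasSum_congr_aux fun m => ?_).mp h2
        have e : (m : ℝ) + (c + 1) = ((m + 1 : ℕ) : ℝ) + c := by push_cast; ring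
        rw [e]; ring)
    simpa using this
  · have := (tendsto_zero (hd0 1).continuousAt).add (ht.const_mul z)
    rw [zero_add] at this
    refine this.congr fun s => ?_
    ring

lemma P_succ_one {c : ℝ} (hc : 0 < c) {r : ℂ} (h : P 1 c r) : P 1 (c + 1) r := by
  obtain ⟨F, hd, hs, ht⟩ := h
  have hd0 : Differentiable ℂ (fun s : ℂ => (c : ℂ) ^ (-s)) := differentiable_D 0 c hc
  refine ⟨fun s => F s - (c : ℂ) ^ (-s), fun s h1 => ?_, fun s h1 => ?_, ?_⟩
  · exact (hd s h1).sub (hd0 s)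
  · have := (hasSum_nat_add_iff' 1).mpr (hs s h1)
    simp only [one_pow, one_mul, Finset.sum_range_one, Nat.cast_zero, zero_add] at this ⊢
    refine (LerchAux.hasSum_congr_aux fun m => ?_).mp this
    have e : (m : ℝ) + (c + 1) = ((m + 1 : ℕ) : ℝ) + c := by push_cast; ring
    rw [e]
  · have := ht.sub (tendsto_zero (hd0 1).continuousAt)
    rw [sub_zero] at this
    refine this.congr fun s => ?_
    ring

lemma P_one_base {c : ℝ} (hc : 0 < c) (hc1 : c ≤ 1) : P 1 c 1 := by
  refine ⟨HurwitzZeta.hurwitzZeta (c : UnitAddCircle),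
    fun s hs => HurwitzZeta.differentiableAt_hurwitzZeta _ hs, fun s hs => ?_,
    HurwitzZeta.hurwitzZeta_residue_one _⟩
  have := HurwitzZeta.hasSum_hurwitzZeta_of_one_lt_re (a := c) ⟨hc.le, hc1⟩ hs
  convert this using 2 with m
  rw [Complex.cpow_neg]
  simp

lemma P_one {c : ℝ} (hc : 0 < c) : P 1 c 1 := by
  have key : ∀ n : ℕ, ∀ c : ℝ, 0 < c → c ≤ n + 1 → P 1 c 1 := by
    intro n
    induction n with
    | zero => intro c h0 h1; exact P_one_base h0 (by simpa using h1)
    | succ n ih =>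
      intro c h0 h1
      push_cast at h1
      by_cases h : c ≤ 1
      · exact P_one_base h0 h
      · have := P_succ_one (by linarith) (ih (c - 1) (by linarith) (by linarith))
        simpa using this
  exact key ⌈c⌉₊ c hc (by have := Nat.le_ceil c; linarith)

open Classical in
lemma P_all {z : ℂ} (hz : ‖z‖ ≤ 1) {c : ℝ} (hc : 0 < c) : P z c (if z = 1 then 1 else 0) := by
  split_ifs with h
  · subst h; exact P_one hc
  · have := P_of_succ hc (P_ne_one hz h (c := c + 1) (by linarith))
    simpa using this

end LerchAux


open Classical in
/-- If some `a j` lies in `ℤ[1/k]`, the `k`-periodic Lerch–Lipschitz zeta function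
`ζ_k(a, x, s)` (real nonnegative `x`) extends meromorphically to `ℂ` with at worst a
simple pole at `s = 1` of residue `(1/k) ∑_{a_j ∈ ℤ[1/k]} e^{2πi j a_j}`. -/
theorem zeta_k_simple_pole_of_in_Zk
    (k : ℕ) (hk : 0 < k)
    (a : Fin k → ℂ) (haIm : ∀ j, 0 ≤ (a j).im)
    (haZ : ∃ j : Fin k, ∃ m : ℤ, (k : ℂ) * a j = (m : ℂ))
    (x : Fin k → ℝ) (hx : ∀ j, 0 ≤ x j) :
    ∃ F : ℂ → ℂ, AnalyticOnNhd ℂ F {s : ℂ | s ≠ 1} ∧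
      (∀ s : ℂ, 1 < s.re →
        F s = ∑' n : ℕ,
          Complex.exp (2 * Real.pi * Complex.I * ((n : ℂ) + 1) *
              a ⟨n % k, Nat.mod_lt n hk⟩) *
            ((((n : ℝ) + 1 + x ⟨n % k, Nat.mod_lt n hk⟩ : ℝ)) : ℂ) ^ (-s)) ∧
      Filter.Tendsto (fun s : ℂ => (s - 1) * F s) (nhdsWithin 1 {(1 : ℂ)}ᶜ)
        (nhds ((1 / (k : ℂ)) * ∑ j : Fin k,
          if ∃ m : ℤ, (k : ℂ) * a j = (m : ℂ) then
            Complex.exp (2 * Real.pi * Complex.I * ((j : ℂ) + 1) * a j)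
          else 0)) := by

  have hk0 : (0 : ℝ) < k := by exact_mod_cast hk
  have hkC : (k : ℂ) ≠ 0 := by exact_mod_cast hk.ne'
  let z : Fin k → ℂ := fun j => Complex.exp (2 * Real.pi * Complex.I * k * a j)
  let c : Fin k → ℝ := fun j => ((j : ℕ) + 1 + x j) / k
  let e : Fin k → ℂ := fun j => Complex.exp (2 * Real.pi * Complex.I * ((j : ℂ) + 1) * a j)
  have hc : ∀ j, 0 < c j := fun j => by have := hx j; positivity
  have hz : ∀ j, ‖z j‖ ≤ 1 := by
    intro j
    simp only [z, Complex.norm_exp]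
    rw [Real.exp_le_one_iff]
    have h := haIm j
    have : (2 * Real.pi * Complex.I * k * a j).re = -(2 * Real.pi * k * (a j).im) := by
      have : (2 * Real.pi * Complex.I * k * a j) = ((2 * Real.pi * k : ℝ) : ℂ) * (Complex.I * a j) := by
        push_cast; ring
      rw [this, Complex.re_ofReal_mul]
      simp
    rw [this]
    have : 0 ≤ 2 * Real.pi * k * (a j).im := by positivity
    linarith
  have hz1 : ∀ j, z j = 1 ↔ ∃ m : ℤ, (k : ℂ) * a j = (m : ℂ) := by
    intro j
    simp only [z, Complex.exp_eq_one_iff]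
    refine exists_congr fun m => ?_
    have h2 : (2 * Real.pi * Complex.I : ℂ) ≠ 0 := Complex.two_pi_I_ne_zero
    constructor
    · intro h
      apply mul_left_cancel₀ h2
      linear_combination h
    · intro h
      linear_combination (2 * Real.pi * Complex.I : ℂ) * h
  choose F hFd hFs hFt using fun j => LerchAux.P_all (hz j) (hc j)
  have hkd : Differentiable ℂ (fun s : ℂ => (k : ℂ) ^ (-s)) := by
    simpa [LerchAux.D] using LerchAux.differentiable_D 0 (k : ℝ) hk0
  refine ⟨fun s => ∑ j, e j * (k : ℂ) ^ (-s) * F j s, ?_, ?_, ?_⟩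
  · apply DifferentiableOn.analyticOnNhd _ isOpen_ne
    intro s hs
    refine DifferentiableAt.differentiableWithinAt ?_
    refine DifferentiableAt.fun_sum fun j _ => ?_
    exact ((hkd s).const_mul (e j)).mul (hFd j s hs)
  · intro s hs
    symm
    apply HasSum.tsum_eq
    set f : ℕ → ℂ := fun n => Complex.exp (2 * Real.pi * Complex.I * ((n : ℂ) + 1) *
              a ⟨n % k, Nat.mod_lt n hk⟩) *
            ((((n : ℝ) + 1 + x ⟨n % k, Nat.mod_lt n hk⟩ : ℝ)) : ℂ) ^ (-s) with hf
    have hj : ∀ j : Fin k, HasSum (fun n : ℕ => if (⟨n % k, Nat.mod_lt n hk⟩ : Fin k) = j then f n else 0)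
        (e j * (k : ℂ) ^ (-s) * F j s) := by
      intro j
      have hinj : Function.Injective (fun m : ℕ => m * k + (j : ℕ)) := by
        intro m1 m2 h
        simp only [Nat.add_right_cancel_iff] at h
        exact Nat.eq_of_mul_eq_mul_right hk h
      rw [← hinj.hasSum_iff]
      · have h := (hFs j s hs).mul_left (e j * (k : ℂ) ^ (-s))
        refine (LerchAux.hasSum_congr_aux fun m => ?_).mp h
        symm
        have hm : (⟨(m * k + (j : ℕ)) % k, Nat.mod_lt _ hk⟩ : Fin k) = j := by
          ext
          simp [Nat.mod_eq_of_lt j.2]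
        simp only [Function.comp, hf, hm, if_true]
        have h1 : Complex.exp (2 * Real.pi * Complex.I * (((m * k + (j : ℕ) : ℕ) : ℂ) + 1) * a j)
            = e j * z j ^ m := by
          simp only [e, z]
          rw [← Complex.exp_nat_mul, ← Complex.exp_add]
          congr 1
          push_cast; ring
        have h2 : (((((m * k + (j : ℕ) : ℕ) : ℝ) + 1 + x j : ℝ)) : ℂ) ^ (-s)
            = (k : ℂ) ^ (-s) * ((m + c j : ℝ) : ℂ) ^ (-s) := by
          have h3 := Complex.mul_cpow_ofReal_nonneg hk0.le
            (show 0 ≤ (m : ℝ) + c j by have := hc j; positivity) (-s)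
          rw [← Complex.ofReal_mul] at h3
          rw [Complex.ofReal_natCast] at h3
          rw [← h3]
          congr 2
          simp only [c]
          field_simp
          push_cast; ring
        rw [h1, h2]; ring
      · intro n hn
        rw [if_neg]
        intro h
        apply hn
        refine ⟨n / k, ?_⟩
        rw [← h]
        simpa using Nat.div_add_mod' n k
    have := hasSum_sum (s := Finset.univ) (fun j _ => hj j)
    simpa using this
  · have h1 : Filter.Tendsto (fun s : ℂ => (k : ℂ) ^ (-s)) (nhdsWithin 1 {(1 : ℂ)}ᶜ)
        (nhds (1 / (k : ℂ))) := by
      have := (hkd 1).continuousAt.tendsto.mono_left (nhdsWithin_le_nhds (s := {(1 : ℂ)}ᶜ))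
      simpa [Complex.cpow_neg_one] using this
    have h2 := tendsto_finsetSum Finset.univ (fun j _ => (h1.const_mul (e j)).mul (hFt j))
    convert h2 using 2
    · rw [Finset.mul_sum]
      refine Finset.sum_congr rfl fun j _ => ?_
      ring
    · rw [Finset.mul_sum]
      refine Finset.sum_congr rfl fun j _ => ?_
      simp only [hz1, e]
      split_ifs <;> ring
end

section
/- Fix an integer k ≥ 1 and a : Fin k → ℂ with Im(a j) ≥ 0 and k·(a j) ∉ ℤ for every j. Let Ω := {z : Fin k → ℂ : for every j, (j+1) + z j is not a real number ≤ 0} (equivalently, z j avoids the real ray (−∞, −(j+1)], where j+1 is the 1-based index; this guarantees that n + z_{ι(n)} avoids the closed negative real axis for every n ≥ 1). Then Ω is open in Fin k → ℂ and there exists a function F : (Fin k → ℂ) × ℂ → ℂ that is analytic on Ω × ℂ and satisfies F(z, s) = Σ_{n=1}^∞ exp(2πi·n·a_{ι(n)}) · (n + z_{ι(n)})^{−s} (principal-branch complex powers) for every z ∈ Ω and every s with Re s > 1. -/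
open Complex Set Filter Topology Metric MeasureTheory
open scoped BoundedContinuousFunction Real

noncomputable def dblInt : (ℝ × ℝ →ᵇ ℂ) →L[ℂ] ℂ :=
  LinearMap.mkContinuous
    { toFun := fun g => ∫ θ in (0:ℝ)..2 * π, ∫ φ in (0:ℝ)..2 * π, g (θ, φ)
      map_add' := by
        intro g h
        have h1 : ∀ (g : ℝ × ℝ →ᵇ ℂ) (θ : ℝ),
            IntervalIntegrable (fun φ => g (θ, φ)) volume 0 (2 * π) := fun g θ =>
          Continuous.intervalIntegrable (by fun_prop) _ _
        have h2 : ∀ (g : ℝ × ℝ →ᵇ ℂ),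
            IntervalIntegrable (fun θ => ∫ φ in (0:ℝ)..2 * π, g (θ, φ)) volume 0 (2 * π) := fun g =>
          Continuous.intervalIntegrable
            (intervalIntegral.continuous_parametric_intervalIntegral_of_continuous'
              (f := fun θ φ => g (θ, φ)) (by simpa [Function.uncurry_def] using g.continuous) _ _) _ _
        simp only [BoundedContinuousFunction.coe_add, Pi.add_apply]
        rw [← intervalIntegral.integral_add (h2 g) (h2 h)]
        congr 1
        ext θ
        exact intervalIntegral.integral_add (h1 g θ) (h1 h θ)
      map_smul' := by
        intro c g
        simp }
    ((2 * π) * (2 * π)) (by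
      intro g
      have h2 : (0:ℝ) ≤ 2 * π := by positivity
      have h1 : ∀ θ ∈ Set.uIoc (0:ℝ) (2 * π), ‖∫ φ in (0:ℝ)..2 * π, g (θ, φ)‖ ≤ ‖g‖ * (2 * π) := by
        intro θ _
        have := intervalIntegral.norm_integral_le_of_norm_le_const
          (a := (0:ℝ)) (b := 2 * π) (f := fun φ => g (θ, φ)) (C := ‖g‖)
          (fun φ _ => g.norm_coe_le_norm _)
        simpa [abs_of_nonneg, Real.pi_pos.le] using this
      have := intervalIntegral.norm_integral_le_of_norm_le_const h1
      simp only [sub_zero, abs_of_nonneg h2] at this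
      simp only [LinearMap.coe_mk, AddHom.coe_mk]
      linarith)

theorem dblInt_apply (g : ℝ × ℝ →ᵇ ℂ) :
    dblInt g = ∫ θ in (0:ℝ)..2 * π, ∫ φ in (0:ℝ)..2 * π, g (θ, φ) := rfl

/-- Cauchy kernel bounded functions -/
theorem exists_bcf (f : ℝ × ℝ → ℂ) (hf : Continuous f) (C : ℝ) (hC : ∀ x, ‖f x‖ ≤ C) :
    ∃ g : ℝ × ℝ →ᵇ ℂ, ∀ x, g x = f x :=
  ⟨BoundedContinuousFunction.ofNormedAddCommGroup f hf C hC, fun _ => rfl⟩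

theorem inverse_bcf_apply (g : ℝ × ℝ →ᵇ ℂ) (hg : IsUnit g) (x : ℝ × ℝ) :
    (Ring.inverse g) x = (g x)⁻¹ := by
  have := Ring.inverse_mul_cancel g hg
  have h := congrArg (fun u : ℝ × ℝ →ᵇ ℂ => u x) this
  simp at h
  exact eq_inv_of_mul_eq_one_left h

theorem isUnit_bcf (g h : ℝ × ℝ →ᵇ ℂ) (H : ∀ x, g x * h x = 1) : IsUnit g :=
  IsUnit.of_mul_eq_one h (by ext x; simp [H])

theorem osgood {f : ℂ × ℂ → ℂ} {U : Set (ℂ × ℂ)} (hU : IsOpen U) (hc : ContinuousOn f U)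
    (h1 : ∀ p ∈ U, DifferentiableAt ℂ (fun w => f (w, p.2)) p.1)
    (h2 : ∀ p ∈ U, DifferentiableAt ℂ (fun s => f (p.1, s)) p.2) :
    AnalyticOnNhd ℂ f U := by
  rintro ⟨w0, s0⟩ hp
  obtain ⟨R, hR, hsub⟩ := Metric.nhds_basis_closedBall.mem_iff.1 (hU.mem_nhds hp)
  rw [← closedBall_prod_same] at hsub
  have hcpt : IsCompact (closedBall w0 R ×ˢ closedBall s0 R) :=
    (isCompact_closedBall _ _).prod (isCompact_closedBall _ _)
  have hcK := hc.mono hsub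
  obtain ⟨C, hC⟩ := hcpt.exists_bound_of_continuousOn hcK
  have hmem : ∀ (c : ℂ) θ, circleMap c R θ ∈ closedBall c R := fun c θ =>
    circleMap_mem_closedBall c hR.le θ
  obtain ⟨F, hF⟩ := exists_bcf (fun x => f (circleMap w0 R x.1, circleMap s0 R x.2))
    (hcK.comp_continuous (by fun_prop) (fun x => ⟨hmem _ _, hmem _ _⟩)) C
    (fun x => hC _ ⟨hmem _ _, hmem _ _⟩)
  obtain ⟨E1, hE1⟩ := exists_bcf (fun x => circleMap 0 R x.1) (by fun_prop) R
    (fun x => by simp [abs_of_pos hR])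
  obtain ⟨E2, hE2⟩ := exists_bcf (fun x => circleMap 0 R x.2) (by fun_prop) R
    (fun x => by simp [abs_of_pos hR])
  have hne : ∀ θ, circleMap 0 R θ ≠ 0 := fun θ => circleMap_ne_center hR.ne'
  obtain ⟨I1, hI1⟩ := exists_bcf (fun x => (circleMap 0 R x.1)⁻¹)
    (Continuous.inv₀ (by fun_prop) (fun x => hne _)) R⁻¹ (fun x => by simp [abs_of_pos hR])
  obtain ⟨I2, hI2⟩ := exists_bcf (fun x => (circleMap 0 R x.2)⁻¹)
    (Continuous.inv₀ (by fun_prop) (fun x => hne _)) R⁻¹ (fun x => by simp [abs_of_pos hR])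
  have u1 : IsUnit E1 := isUnit_bcf E1 I1 (fun x => by rw [hE1, hI1]; exact mul_inv_cancel₀ (hne _))
  have u2 : IsUnit E2 := isUnit_bcf E2 I2 (fun x => by rw [hE2, hI2]; exact mul_inv_cancel₀ (hne _))
  let A1 : ℂ × ℂ → (ℝ × ℝ →ᵇ ℂ) := fun p => E1 - (p.1 - w0) • 1
  let A2 : ℂ × ℂ → (ℝ × ℝ →ᵇ ℂ) := fun p => E2 - (p.2 - s0) • 1
  have a1 : AnalyticAt ℂ A1 (w0, s0) :=
    analyticAt_const.sub ((analyticAt_fst.sub analyticAt_const).smul analyticAt_const)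
  have a2 : AnalyticAt ℂ A2 (w0, s0) :=
    analyticAt_const.sub ((analyticAt_snd.sub analyticAt_const).smul analyticAt_const)
  have e1 : A1 (w0, s0) = E1 := by simp [A1]
  have e2 : A2 (w0, s0) = E2 := by simp [A2]
  have b1 : AnalyticAt ℂ (fun p => Ring.inverse (A1 p)) (w0, s0) := by
    refine AnalyticAt.fun_comp (g := Ring.inverse) ?_ a1
    rw [e1]; exact analyticAt_inverse u1.unit
  have b2 : AnalyticAt ℂ (fun p => Ring.inverse (A2 p)) (w0, s0) := by
    refine AnalyticAt.fun_comp (g := Ring.inverse) ?_ a2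
    rw [e2]; exact analyticAt_inverse u2.unit
  have key : AnalyticAt ℂ (fun p => (2 * π * I : ℂ)⁻¹ * (2 * π * I : ℂ)⁻¹ * 
      dblInt (((E1 * I • (1 : ℝ × ℝ →ᵇ ℂ)) * Ring.inverse (A1 p)) *
        (((E2 * I • (1 : ℝ × ℝ →ᵇ ℂ)) * Ring.inverse (A2 p)) * F))) (w0, s0) := by
    refine analyticAt_const.mul ?_
    refine (dblInt.analyticAt _).fun_comp ?_
    exact (analyticAt_const.mul b1).mul ((analyticAt_const.mul b2).mul analyticAt_const)
  refine key.congr ?_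
  have o1 : ∀ᶠ p in 𝓝 (w0, s0), IsUnit (A1 p) :=
    a1.continuousAt.eventually (by rw [e1]; exact Units.isOpen.mem_nhds u1)
  have o2 : ∀ᶠ p in 𝓝 (w0, s0), IsUnit (A2 p) :=
    a2.continuousAt.eventually (by rw [e2]; exact Units.isOpen.mem_nhds u2)
  have o3 : ∀ᶠ p in 𝓝 (w0, s0), p ∈ ball (w0, s0) R := ball_mem_nhds _ hR
  filter_upwards [o1, o2, o3] with p hp1 hp2 hp3
  obtain ⟨w, s⟩ := p
  rw [← ball_prod_same] at hp3
  obtain ⟨hw, hs⟩ := hp3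
  simp only at hw hs
  have cauchy : ∀ (g : ℂ → ℂ) (c x : ℂ), x ∈ ball c R →
      (∀ y ∈ closedBall c R, DifferentiableAt ℂ g y) →
      ∫ θ in (0:ℝ)..2 * π, (circleMap 0 R θ * I * (circleMap c R θ - x)⁻¹) * g (circleMap c R θ)
        = (2 * π * I) * g x := by
    intro g c x hx hg
    have := Complex.circleIntegral_sub_inv_smul_of_differentiable_on_off_countable
      (s := ∅) countable_empty hx (fun y hy => (hg y hy).continuousAt.continuousWithinAt)
      (fun y hy => hg y (ball_subset_closedBall hy.1))
    simp only [circleIntegral, deriv_circleMap, smul_eq_mul] at this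
    rw [← this]
    congr 1; ext θ; ring
  rw [dblInt_apply]
  have hin : ∀ θ φ : ℝ, (((E1 * I • (1 : ℝ × ℝ →ᵇ ℂ)) * Ring.inverse (A1 (w, s))) *
        (((E2 * I • (1 : ℝ × ℝ →ᵇ ℂ)) * Ring.inverse (A2 (w, s))) * F)) (θ, φ) =
      (circleMap 0 R θ * I * (circleMap w0 R θ - w)⁻¹) *
        ((circleMap 0 R φ * I * (circleMap s0 R φ - s)⁻¹) *
          f (circleMap w0 R θ, circleMap s0 R φ)) := by
    intro θ φ
    have q1 : circleMap 0 R θ - (w - w0) = circleMap w0 R θ - w := by simp [circleMap]; ring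
    have q2 : circleMap 0 R φ - (s - s0) = circleMap s0 R φ - s := by simp [circleMap]; ring
    simp only [BoundedContinuousFunction.mul_apply, inverse_bcf_apply _ hp1,
      inverse_bcf_apply _ hp2, hF, hE1, BoundedContinuousFunction.coe_smul,
      BoundedContinuousFunction.coe_one, Pi.one_apply, smul_eq_mul, mul_one, hE2, A1, A2,
      BoundedContinuousFunction.coe_sub, Pi.sub_apply, q1, q2]
  simp only [hin, intervalIntegral.integral_const_mul]
  have inner : ∀ θ : ℝ, ∫ φ in (0:ℝ)..2 * π, (circleMap 0 R φ * I * (circleMap s0 R φ - s)⁻¹) *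
          f (circleMap w0 R θ, circleMap s0 R φ) = (2 * π * I) * f (circleMap w0 R θ, s) := by
    intro θ
    exact cauchy (fun y => f (circleMap w0 R θ, y)) s0 s hs
      (fun y hy => h2 (circleMap w0 R θ, y) (hsub ⟨hmem _ _, hy⟩))
  simp only [inner]
  have outer := cauchy (fun y => f (y, s)) w0 w hw
      (fun y hy => h1 (y, s) (hsub ⟨hy, ball_subset_closedBall hs⟩))
  have : ∀ θ : ℝ, (circleMap 0 R θ * I * (circleMap w0 R θ - w)⁻¹) *
      ((2 * π * I) * f (circleMap w0 R θ, s)) = (2 * π * I) *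
      ((circleMap 0 R θ * I * (circleMap w0 R θ - w)⁻¹) * f (circleMap w0 R θ, s)) := by
    intro θ; ring
  simp only [this, intervalIntegral.integral_const_mul]
  rw [outer]
  have hpi : (2 * π * I : ℂ) ≠ 0 := by simp [Real.pi_ne_zero]
  field_simp

theorem osgood' {f : ℂ × ℂ → ℂ} {U : Set (ℂ × ℂ)} (hU : IsOpen U)
    (hd : ∀ p ∈ U, DifferentiableAt ℂ f p) : AnalyticOnNhd ℂ f U := by
  refine osgood hU (fun p hp => (hd p hp).continuousAt.continuousWithinAt) ?_ ?_
  · intro p hp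
    exact DifferentiableAt.comp (𝕜 := ℂ) (g := f) (f := fun w => (w, p.2)) p.1 (hd p hp) (by fun_prop)
  · intro p hp
    exact DifferentiableAt.comp (𝕜 := ℂ) (g := f) (f := fun w => (p.1, w)) p.2 (hd p hp) (by fun_prop)

theorem analytic_tsum {F : ℕ → ℂ × ℂ → ℂ} {u : ℕ → ℝ} (hu : Summable u) {U : Set (ℂ × ℂ)}
    (hU : IsOpen U) (hF : ∀ n, ∀ p ∈ U, DifferentiableAt ℂ (F n) p)
    (hb : ∀ n, ∀ p ∈ U, ‖F n p‖ ≤ u n) :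
    AnalyticOnNhd ℂ (fun p => ∑' n, F n p) U := by
  refine osgood hU (continuousOn_tsum (fun n p hp => (hF n p hp).continuousAt.continuousWithinAt)
    hu hb) ?_ ?_
  · intro p hp
    have ho : IsOpen ((fun w => (w, p.2)) ⁻¹' U) := hU.preimage (by fun_prop)
    refine (differentiableOn_tsum_of_summable_norm (F := fun n w => F n (w, p.2)) hu ?_ ho
      (fun n w hw => hb n _ hw)).differentiableAt (ho.mem_nhds hp)
    intro n w hw
    exact (DifferentiableAt.comp (𝕜 := ℂ) (g := F n) (f := fun w => (w, p.2)) w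
      (hF n _ hw) (by fun_prop)).differentiableWithinAt
  · intro p hp
    have ho : IsOpen ((fun w => (p.1, w)) ⁻¹' U) := hU.preimage (by fun_prop)
    refine (differentiableOn_tsum_of_summable_norm (F := fun n w => F n (p.1, w)) hu ?_ ho
      (fun n w hw => hb n _ hw)).differentiableAt (ho.mem_nhds hp)
    intro n w hw
    exact (DifferentiableAt.comp (𝕜 := ℂ) (g := F n) (f := fun w => (p.1, w)) w
      (hF n _ hw) (by fun_prop)).differentiableWithinAt

theorem analytic_shift_integral {H : ℂ × ℂ → ℂ} {U V : Set (ℂ × ℂ)} (hU : IsOpen U)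
    (hH : AnalyticOnNhd ℂ H V) (K : ℝ) (hK : 0 ≤ K)
    (hUV : ∀ p ∈ U, ∀ t : ℝ, 0 ≤ t → (p.1 + t, p.2 + 1) ∈ V) :
    AnalyticOnNhd ℂ (fun p => ∫ t in (0:ℝ)..K, H (p.1 + t, p.2 + 1)) U := by
  refine osgood' hU ?_
  intro p hp
  obtain ⟨R, hR, hsub⟩ := Metric.nhds_basis_closedBall.mem_iff.1 (hU.mem_nhds hp)
  have hcH : ContinuousOn H V := hH.continuousOn
  have hcF : ContinuousOn (fderiv ℂ H) V := hH.fderiv.continuousOn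
  let T : (ℂ × ℂ) × ℝ → ℂ × ℂ := fun x => (x.1.1 + x.2, x.1.2 + 1)
  have hT : Continuous T := by fun_prop
  have hTm : MapsTo T (closedBall p R ×ˢ Icc 0 K) V := fun x hx => hUV _ (hsub hx.1) _ hx.2.1
  obtain ⟨C, hC⟩ := ((isCompact_closedBall p R).prod (isCompact_Icc (a := (0:ℝ)) (b := K))).exists_bound_of_continuousOn
    (hcF.comp hT.continuousOn hTm)
  have hIoc : ∀ t ∈ Set.uIoc 0 K, t ∈ Icc 0 K := by
    intro t ht; rw [uIoc_of_le hK] at ht; exact Ioc_subset_Icc_self ht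
  have hs1 : ∀ x ∈ ball p R, ContinuousOn (fun t : ℝ => H (x.1 + t, x.2 + 1)) (Icc 0 K) := by
    intro x hx
    exact hcH.comp (f := fun t : ℝ => (x.1 + (t:ℂ), x.2 + 1)) (by fun_prop)
      (fun t ht => hUV _ (hsub (ball_subset_closedBall hx)) _ ht.1)
  have hs2 : ContinuousOn (fun t : ℝ => fderiv ℂ H (p.1 + t, p.2 + 1)) (Icc 0 K) := by
    exact hcF.comp (f := fun t : ℝ => (p.1 + (t:ℂ), p.2 + 1)) (by fun_prop)
      (fun t ht => hUV _ hp _ ht.1)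
  refine (intervalIntegral.hasFDerivAt_integral_of_dominated_of_fderiv_le (𝕜 := ℂ) (μ := volume)
    (F := fun p t => H (p.1 + t, p.2 + 1)) (F' := fun p t => fderiv ℂ H (p.1 + t, p.2 + 1))
    (bound := fun _ => C) (ball_mem_nhds p hR) ?_ ?_ ?_ ?_ ?_ ?_).differentiableAt
  · filter_upwards [ball_mem_nhds p hR] with x hx
    exact ((hs1 x hx).mono hIoc).aestronglyMeasurable measurableSet_uIoc
  · exact ContinuousOn.intervalIntegrable (by rw [uIcc_of_le hK]; exact hs1 p (mem_ball_self hR))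
  · exact (hs2.mono hIoc).aestronglyMeasurable measurableSet_uIoc
  · exact ae_of_all _ fun t ht x hx => hC (x, t) ⟨ball_subset_closedBall hx, hIoc t ht⟩
  · exact intervalIntegrable_const
  · refine ae_of_all _ fun t ht x hx => ?_
    have h1 := (hH _ (hUV x (hsub (ball_subset_closedBall hx)) t (hIoc t ht).1)).differentiableAt.hasFDerivAt
    have h2 : HasFDerivAt (fun x : ℂ × ℂ => (x.1 + (t:ℂ), x.2 + 1)) (ContinuousLinearMap.id ℂ _) x := by
      have := (hasFDerivAt_id (𝕜 := ℂ) x).add_const ((t:ℂ), (1:ℂ))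
      exact this
    have := h1.comp x h2
    rw [ContinuousLinearMap.comp_id] at this
    exact this

theorem slit_lower_bound {w0 : ℂ} (hw0 : w0 ∈ slitPlane) :
    ∃ δ > 0, ∃ c : ℝ, 0 < c ∧ c ≤ 1 ∧ ∀ w ∈ ball w0 δ, w ∈ slitPlane ∧
      ∀ t : ℝ, 0 ≤ t → c * (1 + t) ≤ ‖w + t‖ := by
  obtain ⟨ε, hε, hsub⟩ := Metric.isOpen_iff.1 isOpen_slitPlane w0 hw0
  refine ⟨ε / 2, by positivity, (ε / 2) / (1 + (‖w0‖ + ε / 2) + ε / 2), by positivity, ?_, ?_⟩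
  · rw [div_le_one (by positivity)]
    nlinarith [norm_nonneg w0]
  intro w hw
  refine ⟨hsub (ball_subset_ball (by linarith) hw), fun t ht => ?_⟩
  have hwd : dist w w0 < ε / 2 := hw
  have h1 : ε / 2 ≤ ‖w + t‖ := by
    by_contra hlt
    push Not at hlt
    have hd : dist (-(t:ℂ)) w = ‖w + t‖ := by
      rw [dist_comm, dist_eq_norm, sub_neg_eq_add]
    have : (-(t:ℂ)) ∈ slitPlane := hsub (by
      rw [mem_ball]
      calc dist (-(t:ℂ)) w0 ≤ dist (-(t:ℂ)) w + dist w w0 := dist_triangle _ _ _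
        _ < ε := by rw [hd]; linarith)
    rw [mem_slitPlane_iff] at this
    simp at this
    linarith
  have h2 : t - (‖w0‖ + ε / 2) ≤ ‖w + t‖ := by
    have a1 : ‖(t:ℂ)‖ ≤ ‖w + t‖ + ‖w‖ := by
      calc ‖(t:ℂ)‖ = ‖(w + t) - w‖ := by ring_nf
        _ ≤ _ := norm_sub_le _ _
    have a2 : ‖w‖ ≤ ‖w0‖ + dist w w0 := by
      rw [dist_eq_norm]
      calc ‖w‖ = ‖w0 + (w - w0)‖ := by ring_nf
        _ ≤ _ := norm_add_le _ _
    rw [Complex.norm_real, Real.norm_of_nonneg ht] at a1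
    linarith
  have hpos : 0 < 1 + (‖w0‖ + ε / 2) + ε / 2 := by positivity
  rw [div_mul_eq_mul_div, div_le_iff₀ hpos]
  nlinarith [norm_nonneg w0, mul_le_mul_of_nonneg_left h2 hε.le,
    mul_le_mul_of_nonneg_left h1 (by positivity : 0 ≤ 1 + (‖w0‖ + ε / 2))]

theorem cpow_bound {c x σ T : ℝ} (hc : 0 < c) (hc1 : c ≤ 1) (hx : 0 ≤ x) (hσ : 0 < σ) {w s : ℂ}
    (hw : c * (1 + x) ≤ ‖w‖) (h1 : σ ≤ s.re) (h2 : s.re ≤ T) (h3 : |s.im| ≤ T) :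
    ‖w ^ (-s)‖ ≤ (c ^ (-T) * Real.exp (π * T)) * (1 + x) ^ (-σ) := by
  have h0 : 0 < c * (1 + x) := by positivity
  refine (norm_cpow_le w (-s)).trans ?_
  rw [div_eq_mul_inv, ← Real.exp_neg]
  have e1 : ‖w‖ ^ (-s).re ≤ c ^ (-T) * (1 + x) ^ (-σ) := by
    calc ‖w‖ ^ (-s).re ≤ (c * (1 + x)) ^ (-s).re :=
          Real.rpow_le_rpow_of_nonpos h0 hw (by simp; linarith)
      _ = c ^ (-s).re * (1 + x) ^ (-s).re := Real.mul_rpow hc.le (by linarith)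
      _ ≤ _ := by
        gcongr ?_ * ?_
        · exact Real.rpow_le_rpow_of_exponent_ge hc hc1 (by simp; linarith)
        · exact Real.rpow_le_rpow_of_exponent_le (by linarith) (by simp; linarith)
  have e2 : Real.exp (-(arg w * (-s).im)) ≤ Real.exp (π * T) := by
    apply Real.exp_le_exp.2
    have : -(arg w * (-s).im) = arg w * s.im := by simp
    rw [this]
    calc arg w * s.im ≤ |arg w * s.im| := le_abs_self _
      _ = |arg w| * |s.im| := abs_mul _ _
      _ ≤ π * T := mul_le_mul (abs_arg_le_pi w) h3 (abs_nonneg _) Real.pi_pos.le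
  calc _ ≤ (c ^ (-T) * (1 + x) ^ (-σ)) * Real.exp (π * T) := by gcongr
    _ = _ := by ring

/-- Terms of the one-block series. -/
noncomputable def lterm (q : ℂ) (k : ℕ) (m : ℕ) (p : ℂ × ℂ) : ℂ :=
  q ^ m * (p.1 + k * m) ^ (-p.2)

theorem add_mem_slit {w : ℂ} (hw : w ∈ slitPlane) {t : ℝ} (ht : 0 ≤ t) : w + t ∈ slitPlane := by
  rw [mem_slitPlane_iff] at *
  rcases hw with h | h
  · left; simp; linarith
  · right; simpa using h

theorem add_mul_mem_slit {w : ℂ} (hw : w ∈ slitPlane) (k m : ℕ) : w + k * m ∈ slitPlane := by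
  have := add_mem_slit hw (t := (k * m : ℝ)) (by positivity)
  push_cast at this
  exact this

def dom (N : ℕ) : Set (ℂ × ℂ) := {p | p.1 ∈ slitPlane ∧ 1 - (N:ℝ) < p.2.re}

theorem isOpen_dom (N : ℕ) : IsOpen (dom N) := by
  refine (isOpen_slitPlane.preimage continuous_fst).inter ?_
  exact isOpen_lt continuous_const (Complex.continuous_re.comp continuous_snd)

theorem lterm_local_bound {q : ℂ} (hq : ‖q‖ ≤ 1) {k : ℕ} (hk : 0 < k) {p0 : ℂ × ℂ}
    (hp0 : p0 ∈ dom 0) :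
    ∃ V : Set (ℂ × ℂ), IsOpen V ∧ p0 ∈ V ∧ V ⊆ dom 0 ∧ ∃ u : ℕ → ℝ, Summable u ∧
      ∀ m, ∀ p ∈ V, ∀ t : ℝ, 0 ≤ t → ‖lterm q k m (p.1 + t, p.2)‖ ≤ u m := by
  obtain ⟨hw, hs⟩ := hp0
  simp only [Nat.cast_zero, sub_zero] at hs
  obtain ⟨δ, hδ, c, hc, hc1, H⟩ := slit_lower_bound hw
  obtain ⟨σ, hσ1, hσ2⟩ := exists_between hs
  let T : ℝ := |p0.2.re| + |p0.2.im| + 1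
  refine ⟨(ball p0.1 δ) ×ˢ ({s | σ < s.re} ∩ ball p0.2 1), ?_, ?_, ?_,
    fun m => (c ^ (-T) * Real.exp (π * T)) * (1 + (m:ℝ)) ^ (-σ), ?_, ?_⟩
  · exact isOpen_ball.prod ((isOpen_lt continuous_const Complex.continuous_re).inter isOpen_ball)
  · exact ⟨mem_ball_self hδ, hσ2, mem_ball_self one_pos⟩
  · rintro p ⟨h1, h2, _⟩
    refine ⟨(H _ h1).1, ?_⟩
    simp only [Nat.cast_zero, sub_zero]
    exact hσ1.trans h2
  · refine Summable.mul_left _ ?_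
    have := (summable_nat_add_iff 1).2 (Real.summable_nat_rpow (p := -σ).2 (by linarith))
    refine this.congr fun m => ?_
    push_cast
    rw [add_comm]
  · rintro m p ⟨h1, h2, h3⟩ t ht
    have hk1 : (1:ℝ) ≤ k := by exact_mod_cast hk
    have hb := (H _ h1).2 (t + k * m) (by positivity)
    have hd : ‖p.2 - p0.2‖ < 1 := by simpa [dist_eq_norm] using h3
    have hre : |p.2.re - p0.2.re| < 1 := by
      have := Complex.abs_re_le_norm (p.2 - p0.2); simp at this; linarith
    have him : |p.2.im - p0.2.im| < 1 := by
      have := Complex.abs_im_le_norm (p.2 - p0.2); simp at this; linarith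
    have hT1 : p.2.re ≤ T := by
      have := le_abs_self (p.2.re - p0.2.re)
      have := le_abs_self p0.2.re
      have := abs_nonneg p0.2.im
      simp only [T]; linarith
    have hT2 : |p.2.im| ≤ T := by
      have : |p.2.im| ≤ |p.2.im - p0.2.im| + |p0.2.im| := by
        simpa using abs_add_le (p.2.im - p0.2.im) p0.2.im
      have := abs_nonneg p0.2.re
      simp only [T]; linarith
    have hw' : c * (1 + (m:ℝ)) ≤ ‖p.1 + t + k * m‖ := by
      push_cast at hb
      rw [← add_assoc p.1] at hb
      refine le_trans ?_ hb
      have : (m:ℝ) ≤ k * m := by nlinarith [(Nat.cast_nonneg m : (0:ℝ) ≤ m)]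
      gcongr
      linarith
    have hcp := cpow_bound hc hc1 (Nat.cast_nonneg m) (by linarith : 0 < σ) hw' (le_of_lt h2) hT1 hT2
    simp only [lterm, norm_mul, norm_pow]
    calc _ ≤ 1 * ‖(p.1 + t + k * m) ^ (-p.2)‖ := by
          gcongr
          exact pow_le_one₀ (norm_nonneg _) hq
      _ ≤ _ := by rw [one_mul]; exact hcp

theorem lterm_summable {q : ℂ} (hq : ‖q‖ ≤ 1) {k : ℕ} (hk : 0 < k) {p : ℂ × ℂ}
    (hp : p ∈ dom 0) : Summable (fun m => lterm q k m p) := by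
  obtain ⟨V, _, hpV, _, u, hu, hb⟩ := lterm_local_bound hq hk hp
  refine Summable.of_norm_bounded hu fun m => ?_
  simpa using hb m p hpV 0 le_rfl

theorem lterm_differentiableAt (q : ℂ) (k m : ℕ) {p : ℂ × ℂ} (hp : p.1 ∈ slitPlane) :
    DifferentiableAt ℂ (lterm q k m) p := by
  unfold lterm
  refine (differentiableAt_const _).mul ?_
  exact DifferentiableAt.cpow (by fun_prop) (by fun_prop) (add_mul_mem_slit hp k m)

/-- The approximations to the continuation -/
noncomputable def lG (q : ℂ) (k : ℕ) : ℕ → ℂ × ℂ → ℂ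
  | 0 => fun p => ∑' m, lterm q k m p
  | N + 1 => fun p => (1 - q)⁻¹ * (p.1 ^ (-p.2) -
      q * p.2 * ∫ t in (0:ℝ)..(k:ℝ), lG q k N (p.1 + t, p.2 + 1))

theorem dom_shift {N : ℕ} {p : ℂ × ℂ} (hp : p ∈ dom (N + 1)) {t : ℝ} (ht : 0 ≤ t) :
    (p.1 + t, p.2 + 1) ∈ dom N := by
  refine ⟨add_mem_slit hp.1 ht, ?_⟩
  have := hp.2
  push_cast at this
  simp
  linarith

theorem dom_mono {N M : ℕ} (h : N ≤ M) : dom N ⊆ dom M := by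
  intro p hp
  refine ⟨hp.1, lt_of_le_of_lt ?_ hp.2⟩
  have : (N:ℝ) ≤ M := by exact_mod_cast h
  linarith

theorem lG_analytic {q : ℂ} (hq : ‖q‖ ≤ 1) {k : ℕ} (hk : 0 < k) (N : ℕ) :
    AnalyticOnNhd ℂ (lG q k N) (dom N) := by
  induction N with
  | zero =>
    intro p hp
    obtain ⟨V, hV, hpV, hVd, u, hu, hb⟩ := lterm_local_bound hq hk hp
    refine analytic_tsum hu hV (fun m p hp => lterm_differentiableAt q k m (hVd hp).1) ?_ p hpV
    intro m p hp
    simpa using hb m p hp 0 le_rfl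
  | succ N ih =>
    have h1 := analytic_shift_integral (isOpen_dom (N + 1)) ih k (by positivity)
      (fun p hp t ht => dom_shift hp ht)
    intro p hp
    refine analyticAt_const.mul (AnalyticAt.sub ?_ ((analyticAt_const.mul analyticAt_snd).mul (h1 p hp)))
    exact analyticAt_fst.cpow analyticAt_snd.neg hp.1

theorem lterm_integral (q : ℂ) (k m : ℕ) {p : ℂ × ℂ} (hp : p.1 ∈ slitPlane) :
    p.2 * ∫ t in (0:ℝ)..(k:ℝ), lterm q k m (p.1 + t, p.2 + 1) =
      lterm q k m p - q ^ m * (p.1 + k * (m + 1 : ℕ)) ^ (-p.2) := by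
  have hsl : ∀ t ∈ uIcc (0:ℝ) k, p.1 + t + k * m ∈ slitPlane := fun t ht => by
    rw [uIcc_of_le (by positivity)] at ht
    exact add_mul_mem_slit (add_mem_slit hp ht.1) k m
  have hd : ∀ t ∈ uIcc (0:ℝ) k, HasDerivAt (fun t : ℝ => -(q ^ m * (p.1 + t + k * m) ^ (-p.2)))
      (p.2 * lterm q k m (p.1 + t, p.2 + 1)) t := by
    intro t ht
    have h0 : HasDerivAt (fun z : ℂ => p.1 + z + k * m) 1 (t:ℂ) := by
      simpa using ((hasDerivAt_id (t:ℂ)).const_add p.1).add_const ((k:ℂ) * m)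
    have h1 := ((h0.cpow_const (c := -p.2) (hsl t ht)).const_mul (q ^ m)).neg.comp_ofReal
    convert h1 using 1
    · rfl
    rw [lterm, neg_add' p.2 1]
    ring
  have hcont : ContinuousOn (fun t : ℝ => p.2 * lterm q k m (p.1 + t, p.2 + 1)) (uIcc (0:ℝ) k) := by
    unfold lterm
    refine continuousOn_const.mul (continuousOn_const.mul ?_)
    intro t ht
    exact (ContinuousAt.cpow (f := fun t : ℝ => p.1 + (t:ℂ) + k * m)
      (g := fun _ => -(p.2 + 1)) (by fun_prop) continuousAt_const (hsl t ht)).continuousWithinAt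
  rw [← intervalIntegral.integral_const_mul,
    intervalIntegral.integral_eq_sub_of_hasDerivAt hd hcont.intervalIntegrable]
  simp only [lterm]
  have : p.1 + ((k:ℝ):ℂ) + k * m = p.1 + k * (m + 1 : ℕ) := by push_cast; ring
  rw [this]
  simp
  ring

theorem lG_one_eq {q : ℂ} (hq : ‖q‖ ≤ 1) (hq1 : q ≠ 1) {k : ℕ} (hk : 0 < k) {p : ℂ × ℂ}
    (hp : p ∈ dom 0) : lG q k 1 p = lG q k 0 p := by
  have hp1 : (p.1, p.2 + 1) ∈ dom 0 := by
    simpa using dom_shift (dom_mono (Nat.zero_le 1) hp) (le_refl (0:ℝ))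
  obtain ⟨V, hV, hpV, hVd, u, hu, hb⟩ := lterm_local_bound hq hk hp1
  have hk0 : (0:ℝ) ≤ k := by positivity
  have hmem : ∀ t ∈ Set.uIoc (0:ℝ) k, 0 ≤ t := fun t ht => by
    rw [uIoc_of_le hk0] at ht; exact ht.1.le
  have hsum : HasSum (fun m => ∫ t in (0:ℝ)..(k:ℝ), lterm q k m (p.1 + t, p.2 + 1))
      (∫ t in (0:ℝ)..(k:ℝ), lG q k 0 (p.1 + t, p.2 + 1)) := by
    refine intervalIntegral.hasSum_integral_of_dominated_convergence (fun m _ => u m) ?_ ?_ ?_ ?_ ?_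
    · intro m
      refine ContinuousOn.aestronglyMeasurable ?_ measurableSet_uIoc
      intro t ht
      have h1 := (lterm_differentiableAt q k m (p := (p.1 + t, p.2 + 1))
        (add_mem_slit hp.1 (hmem t ht))).continuousAt
      exact (ContinuousAt.comp (f := fun t : ℝ => (p.1 + (t:ℂ), p.2 + 1)) h1
        (by fun_prop)).continuousWithinAt
    · exact fun m => ae_of_all _ fun t ht => hb m _ hpV t (hmem t ht)
    · exact ae_of_all _ fun t ht => hu
    · exact intervalIntegrable_const
    · refine ae_of_all _ fun t ht => (lterm_summable hq hk ?_).hasSum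
      exact dom_shift (dom_mono (Nat.zero_le 1) hp) (hmem t ht)
  have hS := lterm_summable hq hk hp
  have h2 := (hsum.mul_left (q * p.2)).tsum_eq
  have h3 : ∀ m, q * p.2 * ∫ t in (0:ℝ)..(k:ℝ), lterm q k m (p.1 + t, p.2 + 1) =
      q * lterm q k m p - lterm q k (m + 1) p := by
    intro m
    rw [mul_assoc, lterm_integral q k m hp.1]
    simp only [lterm, pow_succ]
    ring
  simp only [h3] at h2
  rw [(hS.mul_left q).tsum_sub ((summable_nat_add_iff 1).2 hS), tsum_mul_left] at h2
  have h4 := hS.tsum_eq_zero_add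
  have h5 : lterm q k 0 p = p.1 ^ (-p.2) := by simp [lterm]
  have hq2 : (1 - q) ≠ 0 := sub_ne_zero.2 hq1.symm
  have e1 : lG q k 1 p = (1 - q)⁻¹ * (p.1 ^ (-p.2) -
      q * p.2 * ∫ t in (0:ℝ)..(k:ℝ), lG q k 0 (p.1 + t, p.2 + 1)) := rfl
  have e0 : lG q k 0 p = ∑' m, lterm q k m p := rfl
  rw [e1, e0, ← h2, inv_mul_eq_iff_eq_mul₀ hq2]
  rw [h5] at h4
  linear_combination (-1 : ℂ) * h4

theorem lG_succ_eq {q : ℂ} (hq : ‖q‖ ≤ 1) (hq1 : q ≠ 1) {k : ℕ} (hk : 0 < k) (N : ℕ) :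
    ∀ p ∈ dom N, lG q k (N + 1) p = lG q k N p := by
  induction N with
  | zero => exact fun p hp => lG_one_eq hq hq1 hk hp
  | succ N ih =>
    intro p hp
    have : ∫ t in (0:ℝ)..(k:ℝ), lG q k (N + 1) (p.1 + t, p.2 + 1) =
        ∫ t in (0:ℝ)..(k:ℝ), lG q k N (p.1 + t, p.2 + 1) := by
      refine intervalIntegral.integral_congr fun t ht => ?_
      rw [uIcc_of_le (by positivity)] at ht
      exact ih _ (dom_shift hp ht.1)
    change (1 - q)⁻¹ * (p.1 ^ (-p.2) -
      q * p.2 * ∫ t in (0:ℝ)..(k:ℝ), lG q k (N + 1) (p.1 + t, p.2 + 1)) = _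
    rw [this]
    rfl

theorem lG_eq {q : ℂ} (hq : ‖q‖ ≤ 1) (hq1 : q ≠ 1) {k : ℕ} (hk : 0 < k) {N M : ℕ} (h : N ≤ M) :
    ∀ p ∈ dom N, lG q k M p = lG q k N p := by
  induction M, h using Nat.le_induction with
  | base => exact fun _ _ => rfl
  | succ M hM ih =>
    intro p hp
    rw [lG_succ_eq hq hq1 hk M p (dom_mono hM hp), ih p hp]

theorem lerch_continuation {q : ℂ} (hq : ‖q‖ ≤ 1) (hq1 : q ≠ 1) {k : ℕ} (hk : 0 < k) :
    ∃ F : ℂ × ℂ → ℂ, AnalyticOnNhd ℂ F (slitPlane ×ˢ univ) ∧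
      ∀ p ∈ dom 0, F p = ∑' m, lterm q k m p := by
  let n : ℂ × ℂ → ℕ := fun p => ⌊|1 - p.2.re|⌋₊ + 1
  have hn : ∀ p : ℂ × ℂ, p.1 ∈ slitPlane → p ∈ dom (n p) := by
    intro p hp
    refine ⟨hp, ?_⟩
    have h1 := Nat.lt_floor_add_one |1 - p.2.re|
    have h2 := le_abs_self (1 - p.2.re)
    simp only [n]
    push_cast
    linarith
  have key : ∀ N, ∀ p ∈ dom N, lG q k (n p) p = lG q k N p := by
    intro N p hp
    rw [← lG_eq hq hq1 hk (le_max_left N (n p)) p hp,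
      ← lG_eq hq hq1 hk (le_max_right N (n p)) p (hn p hp.1)]
  refine ⟨fun p => lG q k (n p) p, ?_, ?_⟩
  · rintro p ⟨hp, _⟩
    refine (lG_analytic hq hk (n p) p (hn p hp)).congr ?_
    filter_upwards [(isOpen_dom (n p)).mem_nhds (hn p hp)] with p' hp'
    exact (key _ _ hp').symm
  · intro p hp
    exact key 0 p hp

theorem mem_slit_iff' (z : ℂ) : (¬ ∃ x : ℝ, x ≤ 0 ∧ z = (x : ℂ)) ↔ z ∈ slitPlane := by
  rw [mem_slitPlane_iff]
  constructor
  · intro h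
    by_contra hc
    push Not at hc
    exact h ⟨z.re, hc.1, Complex.ext (by simp) (by simp [hc.2])⟩
  · rintro h ⟨x, hx, rfl⟩
    simp at h
    linarith

/-- If no `a j` lies in `ℤ[1/k]`, the `k`-periodic Lerch–Lipschitz zeta function
extends to a function `F(z, s)` of the vectorial variable `z` and `s` that is analytic
on `Ω × ℂ`, where `Ω` is the set of `z` such that every base `(j+1) + z j` avoids the
closed negative real axis. -/
theorem zeta_k_analytic_in_z_and_s_entire
    (k : ℕ) (hk : 0 < k)
    (a : Fin k → ℂ) (haIm : ∀ j, 0 ≤ (a j).im)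
    (haZ : ∀ j : Fin k, ¬ ∃ m : ℤ, (k : ℂ) * a j = (m : ℂ)) :
    IsOpen {z : Fin k → ℂ | ∀ j : Fin k,
        ¬ ∃ x : ℝ, x ≤ 0 ∧ ((j : ℂ) + 1) + z j = (x : ℂ)} ∧
    ∃ F : (Fin k → ℂ) × ℂ → ℂ,
      AnalyticOnNhd ℂ F
        ({z : Fin k → ℂ | ∀ j : Fin k,
            ¬ ∃ x : ℝ, x ≤ 0 ∧ ((j : ℂ) + 1) + z j = (x : ℂ)} ×ˢ Set.univ) ∧
      ∀ z : Fin k → ℂ,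
        (∀ j : Fin k, ¬ ∃ x : ℝ, x ≤ 0 ∧ ((j : ℂ) + 1) + z j = (x : ℂ)) →
        ∀ s : ℂ, 1 < s.re →
          F (z, s) = ∑' n : ℕ,
            Complex.exp (2 * Real.pi * Complex.I * ((n : ℂ) + 1) *
                a ⟨n % k, Nat.mod_lt n hk⟩) *
              (((n : ℂ) + 1) + z ⟨n % k, Nat.mod_lt n hk⟩) ^ (-s) := by
  simp only [mem_slit_iff']
  have hopen : IsOpen {z : Fin k → ℂ | ∀ j : Fin k, ((j : ℂ) + 1) + z j ∈ slitPlane} := by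
    rw [ofPred_forall]
    exact isOpen_iInter_of_finite fun j => isOpen_slitPlane.preimage (by fun_prop)
  refine ⟨hopen, ?_⟩
  let q : Fin k → ℂ := fun j => Complex.exp (2 * π * I * k * a j)
  have hq : ∀ j, ‖q j‖ ≤ 1 := by
    intro j
    simp only [q, Complex.norm_exp]
    rw [Real.exp_le_one_iff]
    have : (2 * π * I * k * a j : ℂ).re = -(2 * π * k * (a j).im) := by
      have : (2 * π * I * k * a j : ℂ) = ((2 * π * k : ℝ) : ℂ) * (I * a j) := by push_cast; ring
      rw [this, Complex.re_ofReal_mul]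
      simp
    rw [this]
    have := haIm j
    have : 0 ≤ 2 * π * k * (a j).im := by positivity
    linarith
  have hq1 : ∀ j, q j ≠ 1 := by
    intro j hj
    obtain ⟨n, hn⟩ := Complex.exp_eq_one_iff.1 hj
    refine haZ j ⟨n, ?_⟩
    have hpi : (2 * π * I : ℂ) ≠ 0 := by simp [Real.pi_ne_zero]
    apply mul_left_cancel₀ hpi
    linear_combination hn
  choose F hFa hFs using fun j => lerch_continuation (hq j) (hq1 j) hk
  refine ⟨fun p => ∑ j : Fin k, Complex.exp (2 * π * I * ((j : ℂ) + 1) * a j) *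
    F j (((j : ℂ) + 1) + p.1 j, p.2), ?_, ?_⟩
  · rintro ⟨z, s⟩ ⟨hz, _⟩
    refine Finset.analyticAt_fun_sum _ fun j _ => analyticAt_const.mul ?_
    refine AnalyticAt.fun_comp (g := F j) (f := fun p : (Fin k → ℂ) × ℂ =>
      (((j : ℂ) + 1) + p.1 j, p.2)) (hFa j _ ⟨hz j, mem_univ _⟩) ?_
    refine (analyticAt_const.add ?_).prod analyticAt_snd
    exact ((ContinuousLinearMap.proj (R := ℂ) (φ := fun _ : Fin k => ℂ) j).comp
      (ContinuousLinearMap.fst ℂ (Fin k → ℂ) ℂ)).analyticAt _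
  · intro z hz s hs
    have hd : ∀ j : Fin k, (((j : ℂ) + 1) + z j, s) ∈ dom 0 := fun j =>
      ⟨hz j, by simpa using hs⟩
    have hsum : ∀ j : Fin k, HasSum (fun m => Complex.exp (2 * π * I * ((j : ℂ) + 1) * a j) *
        lterm (q j) k m (((j : ℂ) + 1) + z j, s))
        (Complex.exp (2 * π * I * ((j : ℂ) + 1) * a j) * F j (((j : ℂ) + 1) + z j, s)) := by
      intro j
      rw [hFs j _ (hd j)]
      exact (lterm_summable (hq j) hk (hd j)).hasSum.mul_left _
    let f : ℕ → ℂ := fun n => Complex.exp (2 * Real.pi * Complex.I * ((n : ℂ) + 1) *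
                a ⟨n % k, Nat.mod_lt n hk⟩) *
              (((n : ℂ) + 1) + z ⟨n % k, Nat.mod_lt n hk⟩) ^ (-s)
    have hterm : ∀ (j : Fin k) (m : ℕ), f (m * k + j) =
        Complex.exp (2 * π * I * ((j : ℂ) + 1) * a j) *
        lterm (q j) k m (((j : ℂ) + 1) + z j, s) := by
      intro j m
      have hj : (⟨(m * k + j) % k, Nat.mod_lt _ hk⟩ : Fin k) = j := by
        ext
        simp [Nat.mod_eq_of_lt j.2]
      simp only [f, hj, lterm, q]
      rw [← mul_assoc, ← Complex.exp_nat_mul, ← Complex.exp_add]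
      push_cast
      congr 2
      · ring
      · ring
    have hpart : ∀ j : Fin k, HasSum (fun m : ℕ => f (m * k + j)) (Complex.exp (2 * π * I * ((j : ℂ) + 1) * a j) * F j (((j : ℂ) + 1) + z j, s)) := by
      intro j
      simp only [hterm]
      exact hsum j
    have hext : ∀ j : Fin k, HasSum (fun n : ℕ => if n % k = j then f n else 0)
        (Complex.exp (2 * π * I * ((j : ℂ) + 1) * a j) * F j (((j : ℂ) + 1) + z j, s)) := by
      intro j
      have hinj : Function.Injective (fun m : ℕ => m * k + (j : ℕ)) := by
        intro x y hxy
        exact Nat.eq_of_mul_eq_mul_right hk (Nat.add_right_cancel hxy)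
      refine (hinj.hasSum_iff ?_).1 ?_
      · intro n hn
        rw [if_neg]
        intro hnj
        refine hn ⟨n / k, ?_⟩
        simp only [← hnj]
        exact Nat.div_add_mod' n k
      · refine (hpart j).congr_fun ?_
        intro m
        simp [Nat.mod_eq_of_lt j.2]
    have htot := hasSum_sum (s := Finset.univ) (fun j _ => hext j)
    have hfe : ∀ n : ℕ, ∑ j : Fin k, (if n % k = (j : ℕ) then f n else 0) = f n := by
      intro n
      rw [Finset.sum_eq_single (⟨n % k, Nat.mod_lt n hk⟩ : Fin k)]
      · simp
      · intro b _ hb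
        rw [if_neg]
        intro h
        exact hb (Fin.ext h.symm)
      · simp
    simp only [hfe] at htot
    exact htot.tsum_eq.symm
end

section
/- Hartogs-type extension over the real slice in finite dimensions: fix k ≥ 1, a point x0 ∈ Fin k → ℂ with all coordinates real, and β > 0; let B be the open ball of radius β centered at x0 in Fin k → ℂ, and let 𝔻 be the open unit disk in ℂ. Let f : (Fin k → ℂ) × ℂ → ℂ be analytic on B × 𝔻, and suppose that for every x ∈ B all of whose coordinates are real there exists an entire function g_x : ℂ → ℂ with g_x(s) = f(x, s) for every s ∈ 𝔻. Then there exists F : (Fin k → ℂ) × ℂ → ℂ analytic on B × ℂ with F(z, s) = f(z, s) for every (z, s) ∈ B × 𝔻. -/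
section HartogsHelpers

open Metric Set Filter Topology

section


theorem hx_iteratedDeriv_line {E G : Type*} [NormedAddCommGroup E] [NormedSpace ℂ E]
    [NormedAddCommGroup G] [NormedSpace ℂ G] [CompleteSpace G]
    {g : E → G} {U : Set E} (hU : IsOpen U) (hg : AnalyticOnNhd ℂ g U) (p y : E) (m : ℕ) :
    ∀ t : ℂ, p + t • y ∈ U →
      iteratedDeriv m (fun t : ℂ => g (p + t • y)) t
        = iteratedFDeriv ℂ m g (p + t • y) (fun _ => y) := by
  induction m with
  | zero => intro t _; simp
  | succ m ih =>
    intro t ht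
    rw [iteratedDeriv_succ]
    have hO : IsOpen {t : ℂ | p + t • y ∈ U} := hU.preimage (by fun_prop)
    have hev : iteratedDeriv m (fun t : ℂ => g (p + t • y)) =ᶠ[𝓝 t]
        fun t => iteratedFDeriv ℂ m g (p + t • y) (fun _ => y) := by
      filter_upwards [hO.mem_nhds ht] with s hs using ih s hs
    rw [hev.deriv_eq]
    have h1 : HasFDerivAt (iteratedFDeriv ℂ m g) (fderiv ℂ (iteratedFDeriv ℂ m g) (p + t • y))
        (p + t • y) := ((hg.iteratedFDeriv m) _ ht).differentiableAt.hasFDerivAt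
    have h2 : HasDerivAt (fun t : ℂ => p + t • y) y t := by
      simpa using ((hasDerivAt_id t).smul_const y).const_add p
    have h3 := h1.comp_hasDerivAt t h2
    have h4 : HasDerivAt (fun t : ℂ => iteratedFDeriv ℂ m g (p + t • y) (fun _ => y))
        ((fderiv ℂ (iteratedFDeriv ℂ m g) (p + t • y) y) (fun _ => y)) t := by
      have := (ContinuousMultilinearMap.apply ℂ (fun _ : Fin m => E) G
        (fun _ => y)).hasFDerivAt.comp_hasDerivAt t h3
      exact this
    rw [h4.deriv, iteratedFDeriv_succ_apply_left]
    rfl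

theorem hx_norm_fderiv_le {E G : Type*} [NormedAddCommGroup E] [NormedSpace ℂ E]
    [NormedAddCommGroup G] [NormedSpace ℂ G]
    {h : E → G} {x : E} {δ C : ℝ} (hδ : 0 < δ)
    (hd : ∀ y ∈ closedBall x δ, DifferentiableAt ℂ h y)
    (hC : ∀ y ∈ closedBall x δ, ‖h y‖ ≤ C) : ‖fderiv ℂ h x‖ ≤ C / δ := by
  have hC0 : 0 ≤ C := (norm_nonneg _).trans (hC x (by simp [hδ.le]))
  refine ContinuousLinearMap.opNorm_le_bound _ (by positivity) fun v => ?_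
  rcases eq_or_ne v 0 with rfl | hv
  · simp
  have hv' : 0 < ‖v‖ := norm_pos_iff.2 hv
  have hmem : ∀ t ∈ closedBall (0 : ℂ) (δ / ‖v‖), x + t • v ∈ closedBall x δ := by
    intro t ht
    rw [mem_closedBall_zero_iff, le_div_iff₀ hv'] at ht
    simpa [norm_smul] using ht
  have h2 : ∀ t : ℂ, HasDerivAt (fun t : ℂ => x + t • v) v t := fun t => by
    simpa using ((hasDerivAt_id t).smul_const v).const_add x
  have hdd : ∀ t ∈ closedBall (0 : ℂ) (δ / ‖v‖),
      HasDerivAt (fun t : ℂ => h (x + t • v)) (fderiv ℂ h (x + t • v) v) t := by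
    intro t ht
    exact (hd _ (hmem t ht)).hasFDerivAt.comp_hasDerivAt t (h2 t)
  have hpos : 0 < δ / ‖v‖ := by positivity
  have := Complex.norm_deriv_le_of_forall_mem_sphere_norm_le (f := fun t : ℂ => h (x + t • v))
    (c := 0) (R := δ / ‖v‖) (C := C) hpos
    (DifferentiableOn.diffContOnCl (fun t ht => by
      rw [closure_ball _ hpos.ne'] at ht
      exact (hdd t ht).differentiableAt.differentiableWithinAt))
    (fun t ht => hC _ (hmem t (sphere_subset_closedBall ht)))
  rw [(hdd 0 (by simp [hpos.le])).deriv] at this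
  simp only [zero_smul, add_zero] at this
  calc _ ≤ _ := this
    _ = _ := by field_simp

theorem hx_norm_iteratedFDeriv_le {E : Type*} [NormedAddCommGroup E] [NormedSpace ℂ E]
    {g : E → ℂ} {p : E} {r M : ℝ} (hg : AnalyticOnNhd ℂ g (ball p r))
    (hM : ∀ x ∈ ball p r, ‖g x‖ ≤ M) {δ : ℝ} (hδ : 0 < δ) (m : ℕ) :
    ∀ x ∈ ball p (r - m * δ), ‖iteratedFDeriv ℂ m g x‖ ≤ M / δ ^ m := by
  induction m with
  | zero => intro x hx; simpa using hM x (by simpa using hx)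
  | succ m ih =>
    intro x hx
    have hsub : ∀ y ∈ closedBall x δ, y ∈ ball p (r - m * δ) := by
      intro y hy
      rw [mem_closedBall] at hy
      rw [mem_ball] at hx ⊢
      push_cast at hx
      have := dist_triangle y x p
      linarith
    have hsub2 : ball p (r - m * δ) ⊆ ball p r := ball_subset_ball (by
      have : (0:ℝ) ≤ m * δ := by positivity
      linarith)
    rw [← norm_fderiv_iteratedFDeriv]
    have := hx_norm_fderiv_le (h := iteratedFDeriv ℂ m g) hδ
      (fun y hy => ((hg.iteratedFDeriv m) y (hsub2 (hsub y hy))).differentiableAt)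
      (fun y hy => ih y (hsub y hy))
    calc _ ≤ _ := this
      _ = _ := by rw [pow_succ]; field_simp

theorem hx_norm_coeff_le {E : Type*} [NormedAddCommGroup E] [NormedSpace ℂ E]
    {g : E → ℂ} {p : E} {r M : ℝ} (hr : 0 < r) (hg : AnalyticOnNhd ℂ g (ball p r))
    (hM : ∀ x ∈ ball p r, ‖g x‖ ≤ M) (m : ℕ) :
    ‖((m.factorial : ℂ)⁻¹) • iteratedFDeriv ℂ m g p‖ ≤ M * (Real.exp 1 * (Real.exp 1 / r) ^ m) := by
  have hM0 : 0 ≤ M := (norm_nonneg _).trans (hM p (by simp [hr]))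
  have h1 := hx_norm_iteratedFDeriv_le hg hM (δ := r / (m + 1)) (by positivity) m p (by
    refine mem_ball_self ?_
    rw [sub_pos, mul_div_assoc', div_lt_iff₀ (by positivity)]
    nlinarith)
  have h2 := Real.pow_div_factorial_le_exp (x := (m + 1 : ℝ)) (by positivity) (m + 1)
  have h3 : ((m + 1 : ℝ)) ^ m / m.factorial ≤ Real.exp 1 * Real.exp 1 ^ m := by
    calc ((m + 1 : ℝ)) ^ m / m.factorial = (m + 1 : ℝ) ^ (m + 1) / (m + 1).factorial := by
          rw [Nat.factorial_succ]; push_cast; field_simp; ring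
      _ ≤ _ := h2
      _ = Real.exp 1 * Real.exp 1 ^ m := by
          rw [← Real.exp_nat_mul, ← Real.exp_add]; congr 1; push_cast; ring
  rw [norm_smul, norm_inv, Complex.norm_natCast]
  calc (m.factorial : ℝ)⁻¹ * ‖iteratedFDeriv ℂ m g p‖
      ≤ (m.factorial : ℝ)⁻¹ * (M / (r / (m + 1)) ^ m) := by gcongr
    _ = M / r ^ m * ((m + 1 : ℝ) ^ m / m.factorial) := by
        rw [div_pow]; field_simp
    _ ≤ M / r ^ m * (Real.exp 1 * Real.exp 1 ^ m) := by gcongr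
    _ = _ := by rw [div_pow]; field_simp

theorem hx_hasSum_line {E : Type*} [NormedAddCommGroup E] [NormedSpace ℂ E]
    {g : E → ℂ} {p : E} {r : ℝ} (hg : AnalyticOnNhd ℂ g (ball p r))
    {y : E} (hy : ‖y‖ < r) :
    HasSum (fun m : ℕ => (((m.factorial : ℂ)⁻¹) • iteratedFDeriv ℂ m g p) (fun _ => y))
      (g (p + y)) := by
  have hr : 0 < r := (norm_nonneg y).trans_lt hy
  obtain ⟨R, hR1, hR⟩ : ∃ R : ℝ, 1 < R ∧ R * ‖y‖ < r := by
    rcases eq_or_ne y 0 with rfl | h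
    · exact ⟨2, by norm_num, by simpa using hr⟩
    · have h' : 0 < ‖y‖ := norm_pos_iff.2 h
      obtain ⟨R, h1, h2⟩ := exists_between ((one_lt_div h').2 hy)
      exact ⟨R, h1, (lt_div_iff₀ h').1 h2⟩
  have hmem : ∀ t ∈ ball (0:ℂ) R, p + t • y ∈ ball p r := by
    intro t ht
    rw [mem_ball_zero_iff] at ht
    rw [mem_ball_iff_norm, add_sub_cancel_left, norm_smul]
    exact (mul_le_mul_of_nonneg_right ht.le (norm_nonneg _)).trans_lt hR
  have hd : DifferentiableOn ℂ (fun t : ℂ => g (p + t • y)) (ball 0 R) := by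
    intro t ht
    have : DifferentiableAt ℂ (fun t : ℂ => p + t • y) t := by fun_prop
    exact ((hg _ (hmem t ht)).differentiableAt.comp t this).differentiableWithinAt
  have := Complex.hasSum_taylorSeries_on_ball hd (z := 1) (by simpa using hR1)
  simp only [sub_zero, one_pow, one_smul] at this
  have hfun : (fun m : ℕ => (((m.factorial : ℂ)⁻¹) • iteratedFDeriv ℂ m g p) (fun _ => y)) =
      fun m : ℕ => ((m.factorial : ℂ)⁻¹) • iteratedDeriv m (fun t : ℂ => g (p + t • y)) 0 := by
    funext m
    rw [hx_iteratedDeriv_line isOpen_ball hg p y m 0 (hmem 0 (by simp; linarith))]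
    simp
  rw [hfun]
  exact this

set_option maxHeartbeats 1000000 in
theorem hx_analyticAt_tsum {E : Type*} [NormedAddCommGroup E] [NormedSpace ℂ E]
    {A : ℕ → E → ℂ} {p : E} {r : ℝ} (hr : 0 < r) {u : ℕ → ℝ} (hu : Summable u)
    (hA : ∀ n, AnalyticOnNhd ℂ (A n) (ball p r))
    (hb : ∀ n, ∀ x ∈ ball p r, ‖A n x‖ ≤ u n) :
    AnalyticAt ℂ (fun x => ∑' n, A n x) p := by
  set e := Real.exp 1 with he
  have he0 : 0 < e := Real.exp_pos 1
  set q : ℕ → FormalMultilinearSeries ℂ E ℂ :=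
    fun n m => ((m.factorial : ℂ)⁻¹) • iteratedFDeriv ℂ m (A n) p with hq
  have hqb : ∀ n m, ‖q n m‖ ≤ u n * (e * (e / r) ^ m) := fun n m =>
    hx_norm_coeff_le hr (hA n) (hb n) m
  have hqs : ∀ m, Summable (fun n => ‖q n m‖) := fun m =>
    Summable.of_nonneg_of_le (fun _ => norm_nonneg _) (fun n => hqb n m) (hu.mul_right _)
  set Q : FormalMultilinearSeries ℂ E ℂ := fun m => ∑' n, q n m with hQ
  have hQb : ∀ m, ‖Q m‖ ≤ (∑' n, u n) * (e * (e / r) ^ m) := fun m => by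
    calc ‖Q m‖ ≤ ∑' n, ‖q n m‖ := norm_tsum_le_tsum_norm (hqs m)
      _ ≤ ∑' n, u n * (e * (e / r) ^ m) :=
        (hqs m).tsum_le_tsum (fun n => hqb n m) (hu.mul_right _)
      _ = _ := tsum_mul_right
  have hu0 : ∀ n, 0 ≤ u n := fun n => (norm_nonneg _).trans (hb n p (by simp [hr]))
  set ρ : NNReal := ⟨r / (2 * e), by positivity⟩ with hρ
  have hρ0 : 0 < ρ := by
    rw [← NNReal.coe_pos]; change 0 < r / (2 * e); positivity
  have hρr : (ρ : ℝ) = r / (2 * e) := rfl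
  have h1e : 1 ≤ e := Real.one_le_exp (by norm_num)
  refine ⟨Q, ρ, ?_, by exact_mod_cast hρ0, ?_⟩
  · refine Q.le_radius_of_bound ((∑' n, u n) * e) fun m => ?_
    calc ‖Q m‖ * (ρ : ℝ) ^ m ≤ (∑' n, u n) * (e * (e / r) ^ m) * (ρ : ℝ) ^ m := by
          gcongr; exact hQb m
      _ = (∑' n, u n) * e * (e / r * ρ) ^ m := by rw [mul_pow]; ring
      _ = (∑' n, u n) * e * (1 / 2) ^ m := by rw [hρr]; congr 2; field_simp
      _ ≤ (∑' n, u n) * e * 1 := by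
          have : 0 ≤ ∑' n, u n := tsum_nonneg hu0
          gcongr
          exact pow_le_one₀ (by norm_num) (by norm_num)
      _ = _ := mul_one _
  · intro y hy
    have hy' : ‖y‖ < r / (2 * e) := by
      have : ‖y‖ < (ρ : ℝ) := by simpa using hy
      exact this
    have hyr : ‖y‖ < r := hy'.trans_le (by
      rw [div_le_iff₀ (by positivity)]; nlinarith)
    have hs : Summable (fun x : ℕ × ℕ => q x.1 x.2 (fun _ => y)) := by
      have hg : Summable (fun m : ℕ => e * (1 / 2 : ℝ) ^ m) :=
        (summable_geometric_of_lt_one (by norm_num) (by norm_num)).mul_left _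
      have := hu.mul_of_nonneg hg hu0 (fun m => by positivity)
      refine Summable.of_norm_bounded this fun x => ?_
      calc ‖q x.1 x.2 (fun _ => y)‖ ≤ ‖q x.1 x.2‖ * ‖y‖ ^ x.2 := by
            simpa using (q x.1 x.2).le_opNorm (fun _ => y)
        _ ≤ u x.1 * (e * (e / r) ^ x.2) * (r / (2 * e)) ^ x.2 := by
            have := hu0 x.1
            gcongr
            exact hqb _ _
        _ = u x.1 * (e * (e / r * (r / (2 * e))) ^ x.2) := by rw [mul_pow]; ring
        _ = u x.1 * (e * (1 / 2) ^ x.2) := by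
            have : e / r * (r / (2 * e)) = 1 / 2 := by field_simp
            rw [this]
    have hs' : Summable (Function.uncurry fun n m : ℕ => q n m (fun _ => y)) := hs
    have hswap : ∑' m, ∑' n, q n m (fun _ => y) = ∑' n, ∑' m, q n m (fun _ => y) :=
      hs'.tsum_comm
    have hrow : ∀ n, ∑' m, q n m (fun _ => y) = A n (p + y) := fun n =>
      (hx_hasSum_line (hA n) hyr).tsum_eq
    have hcol : ∀ m, ∑' n, q n m (fun _ => y) = Q m (fun _ => y) := fun m => by
      have hsm : Summable (fun n => q n m) := (hqs m).of_norm
      exact ((ContinuousMultilinearMap.apply ℂ (fun _ : Fin m => E) ℂ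
        (fun _ => y)).map_tsum hsm).symm
    simp only [hrow, hcol] at hswap
    rw [← hswap]
    have : Summable (fun m => ∑' n, q n m (fun _ => y)) := hs'.prod_symm.prod
    simp only [hcol] at this
    exact this.hasSum

end

section


theorem hx_posLog_le_circleAverage {h : ℂ → ℂ} {c : ℂ} {R : ℝ} (hR : 0 < R)
    (hh : AnalyticOnNhd ℂ h (closedBall c R)) :
    Real.posLog ‖h c‖ ≤ Real.circleAverage (fun z => Real.posLog ‖h z‖) c R := by
  have hnn : 0 ≤ Real.circleAverage (fun z => Real.posLog ‖h z‖) c R :=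
    Real.circleAverage_nonneg_of_nonneg (fun x _ => Real.posLog_nonneg)
  rw [Real.posLog_apply]
  refine max_le hnn ?_
  by_cases h0 : h c = 0
  · simpa [h0] using hnn
  have hh' : AnalyticOnNhd ℂ h (closedBall c |R|) := by rwa [abs_of_pos hR]
  have hms : MeromorphicOn h (sphere c |R|) :=
    fun x hx => (hh' x (sphere_subset_closedBall hx)).meromorphicAt
  have hJ := AnalyticOnNhd.circleAverage_log_norm hR.ne' hh' h0
  have hsum : 0 ≤ ∑ᶠ u, MeromorphicOn.divisor h (closedBall c |R|) u * Real.log (R * ‖c - u‖⁻¹) := by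
    refine finsum_nonneg fun u => ?_
    by_cases hu : u ∈ closedBall c |R|
    · refine mul_nonneg ?_ ?_
      · have := (MeromorphicOn.AnalyticOnNhd.divisor_nonneg hh') u
        exact_mod_cast this
      · rcases eq_or_ne c u with rfl | hne
        · simp
        · apply Real.log_nonneg
          rw [mem_closedBall, abs_of_pos hR, dist_comm, dist_eq_norm] at hu
          rw [← div_eq_mul_inv, one_le_div (norm_pos_iff.2 (sub_ne_zero.2 hne))]
          exact hu
    · rw [Function.locallyFinsuppWithin.apply_eq_zero_of_notMem _ hu]; simp
  calc Real.log ‖h c‖ ≤ Real.circleAverage (fun z => Real.log ‖h z‖) c R := by rw [hJ]; linarith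
    _ ≤ _ := by
      refine Real.circleAverage_mono hms.circleIntegrable_log_norm
        hms.circleIntegrable_posLog_norm fun x _ => ?_
      rw [Real.posLog_apply]; exact le_max_right _ _

open MeasureTheory in
theorem hx_rot_preserving {k : ℕ} (θ : ℝ) :
    MeasurePreserving (fun w : Fin k → ℂ => circleMap 0 1 θ • w) volume volume := by
  have h1 : MeasurePreserving (fun w : ℂ => circleMap 0 1 θ * w) volume volume := by
    have := (rotation (Circle.exp θ)).measurePreserving
    convert! this using 1
    funext w
    simp [circleMap]
  exact volume_preserving_pi (fun _ : Fin k => h1)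

open MeasureTheory in
theorem hx_submean {k : ℕ} {v : (Fin k → ℂ) → ℝ} {z : Fin k → ℂ} {r K : ℝ}
    (hv : ContinuousOn v (ball z r)) (hK : ∀ x ∈ ball z r, ‖v x‖ ≤ K)
    (hm : ∀ w ∈ ball (0 : Fin k → ℂ) r,
      v z ≤ (2 * Real.pi)⁻¹ * ∫ θ in (0:ℝ)..(2 * Real.pi), v (z + circleMap 0 1 θ • w)) :
    v z * volume.real (ball (0 : Fin k → ℂ) r) ≤ ∫ x in ball z r, v x := by
  have h2pi : (0:ℝ) ≤ 2 * Real.pi := by positivity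
  have hfin : volume (ball (0 : Fin k → ℂ) r) < ⊤ := measure_ball_lt_top
  have hmem : ∀ (θ : ℝ), ∀ w ∈ ball (0 : Fin k → ℂ) r, z + circleMap 0 1 θ • w ∈ ball z r := by
    intro θ w hw
    simpa [norm_smul] using hw
  set B := ball (0 : Fin k → ℂ) r with hB
  set I := Ioc (0:ℝ) (2 * Real.pi) with hI
  have hcont : ContinuousOn (fun x : (Fin k → ℂ) × ℝ => v (z + circleMap 0 1 x.2 • x.1))
      (B ×ˢ I) := by
    refine hv.comp ?_ (fun x hx => hmem x.2 x.1 hx.1)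
    have : Continuous (fun x : (Fin k → ℂ) × ℝ => circleMap 0 1 x.2) :=
      (continuous_circleMap 0 1).comp continuous_snd
    exact (continuous_const.add (this.smul continuous_fst)).continuousOn
  have hBm : MeasurableSet B := measurableSet_ball
  have hInteg : Integrable (fun x : (Fin k → ℂ) × ℝ => v (z + circleMap 0 1 x.2 • x.1))
      ((volume.restrict B).prod (volume.restrict I)) := by
    rw [Measure.prod_restrict]
    have hfin2 : (volume.prod volume : Measure ((Fin k → ℂ) × ℝ)) (B ×ˢ I) < ⊤ := by
      rw [Measure.prod_prod]
      exact ENNReal.mul_lt_top hfin measure_Ioc_lt_top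
    refine IntegrableOn.of_bound hfin2
      (hcont.aestronglyMeasurable (hBm.prod measurableSet_Ioc)) K ?_
    filter_upwards [ae_restrict_mem (hBm.prod measurableSet_Ioc)] with x hx
    exact hK _ (hmem _ _ hx.1)
  have hin : ∀ θ : ℝ, ∫ w in B, v (z + circleMap 0 1 θ • w) = ∫ x in ball z r, v x := by
    intro θ
    have hne : circleMap 0 1 θ ≠ 0 := by simp [circleMap]
    have e1 : MeasurePreserving (fun w : Fin k → ℂ => z + circleMap 0 1 θ • w) volume volume :=
      (measurePreserving_add_left volume z).comp (hx_rot_preserving θ)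
    have e2 : MeasurableEmbedding (fun w : Fin k → ℂ => z + circleMap 0 1 θ • w) :=
      ((Homeomorph.smulOfNeZero _ hne).trans (Homeomorph.addLeft z)).measurableEmbedding
    have := e1.setIntegral_preimage_emb e2 v (ball z r)
    rw [← this]
    congr 2
    ext w
    simp [hB, norm_smul]
  calc v z * volume.real B = ∫ w in B, v z := by
        rw [setIntegral_const, smul_eq_mul, mul_comm]
    _ ≤ ∫ w in B, (2 * Real.pi)⁻¹ * ∫ θ in I, v (z + circleMap 0 1 θ • w) := by
        refine setIntegral_mono_on (by simp [integrableOn_const_iff, hfin])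
          (hInteg.integral_prod_left.const_mul _) hBm fun w hw => ?_
        rw [hI, ← intervalIntegral.integral_of_le h2pi]
        exact hm w hw
    _ = (2 * Real.pi)⁻¹ * ∫ w in B, ∫ θ in I, v (z + circleMap 0 1 θ • w) :=
        integral_const_mul _ _
    _ = (2 * Real.pi)⁻¹ * ∫ θ in I, ∫ w in B, v (z + circleMap 0 1 θ • w) := by
        rw [integral_integral_swap (f := fun w θ => v (z + circleMap 0 1 θ • w)) hInteg]
    _ = (2 * Real.pi)⁻¹ * ∫ θ in I, ∫ x in ball z r, v x := by simp only [hin]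
    _ = ∫ x in ball z r, v x := by
        rw [setIntegral_const, smul_eq_mul, hI, Real.volume_real_Ioc_of_le h2pi]
        field_simp
        simp

open MeasureTheory in
theorem hx_unif_of_pointwise {k : ℕ} {a : ℕ → (Fin k → ℂ) → ℂ} {p : Fin k → ℂ} {r C M : ℝ}
    (hr : 0 < r) (hM0 : 0 ≤ M) (hC0 : 0 ≤ C)
    (ha : ∀ n, AnalyticOnNhd ℂ (a n) (ball p (2 * r)))
    (hb : ∀ n, ∀ x ∈ ball p (2 * r), ‖a n x‖ ≤ C * M ^ n)
    (hp : ∀ x ∈ ball p (2 * r), ∀ ε > (0:ℝ), ∀ᶠ n in atTop, ‖a n x‖ ≤ ε ^ n)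
    {ε : ℝ} (hε : 0 < ε) :
    ∀ᶠ n in atTop, ∀ x ∈ ball p r, ‖a n x‖ ≤ ε ^ n := by
  set R : ℝ := 2 / ε with hR
  have hR0 : 0 < R := by positivity
  set v : ℕ → (Fin k → ℂ) → ℝ := fun n x => (n:ℝ)⁻¹ * Real.posLog ‖(R:ℂ) ^ n * a n x‖ with hvdef
  set K : ℝ := Real.posLog C + Real.posLog (R * M) with hKdef
  have hK : ∀ n, 1 ≤ n → ∀ x ∈ ball p (2 * r), ‖v n x‖ ≤ K := by
    intro n hn x hx
    have hn' : (1:ℝ) ≤ n := by exact_mod_cast hn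
    have hnn : 0 ≤ v n x := mul_nonneg (by positivity) Real.posLog_nonneg
    rw [Real.norm_of_nonneg hnn]
    have h1 : Real.posLog ‖(R:ℂ) ^ n * a n x‖ ≤ Real.posLog C + n * Real.posLog (R * M) := by
      calc _ ≤ Real.posLog (C * (R * M) ^ n) := by
            refine Real.posLog_le_posLog (norm_nonneg _) ?_
            rw [norm_mul, norm_pow, Complex.norm_real, Real.norm_of_nonneg hR0.le, mul_pow]
            calc R ^ n * ‖a n x‖ ≤ R ^ n * (C * M ^ n) := by gcongr; exact hb n x hx
              _ = _ := by ring
        _ ≤ _ := by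
            rw [← Real.posLog_pow]
            exact Real.posLog_mul
    calc v n x ≤ (n:ℝ)⁻¹ * (Real.posLog C + n * Real.posLog (R * M)) := by
          simp only [hvdef]; gcongr
      _ = (n:ℝ)⁻¹ * Real.posLog C + Real.posLog (R * M) := by field_simp
      _ ≤ 1 * Real.posLog C + Real.posLog (R * M) := by
          have := inv_le_one_of_one_le₀ hn'
          have h3 : 0 ≤ Real.posLog C := Real.posLog_nonneg
          gcongr
      _ = K := by rw [one_mul]
  have hvc : ∀ n, ContinuousOn (v n) (ball p (2 * r)) := fun n => by
    have h1 := (ha n).continuousOn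
    have h2 : ContinuousOn (fun x => ‖(R:ℂ) ^ n * a n x‖) (ball p (2 * r)) :=
      (continuousOn_const.mul h1).norm
    exact continuousOn_const.mul (Real.continuous_posLog.comp_continuousOn h2)
  have hfin : volume (ball p (2 * r)) < ⊤ := measure_ball_lt_top
  have hlim : Tendsto (fun n => ∫ x in ball p (2 * r), v n x) atTop (𝓝 0) := by
    have : Tendsto (fun n => ∫ x in ball p (2 * r), v n x) atTop
        (𝓝 (∫ x in ball p (2 * r), (0:ℝ))) := by
      refine tendsto_integral_filter_of_dominated_convergence (fun _ => K)
        (Eventually.of_forall fun n => (hvc n).aestronglyMeasurable measurableSet_ball) ?_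
        (by simp [isFiniteMeasure_restrict, hfin.ne]) ?_
      · filter_upwards [eventually_ge_atTop 1] with n hn
        filter_upwards [ae_restrict_mem measurableSet_ball] with x hx using hK n hn x hx
      · filter_upwards [ae_restrict_mem measurableSet_ball] with x hx
        refine tendsto_const_nhds.congr' ?_
        filter_upwards [hp x hx R⁻¹ (by positivity)] with n hn
        have : Real.posLog ‖(R:ℂ) ^ n * a n x‖ = 0 := by
          rw [Real.posLog_eq_zero_iff, abs_of_nonneg (norm_nonneg _), norm_mul, norm_pow,
            Complex.norm_real, Real.norm_of_nonneg hR0.le]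
          calc R ^ n * ‖a n x‖ ≤ R ^ n * R⁻¹ ^ n := by gcongr
            _ = 1 := by rw [← mul_pow, mul_inv_cancel₀ hR0.ne', one_pow]
        simp only [hvdef, this, mul_zero]
    simpa using this
  have hvol : 0 < volume.real (ball (0 : Fin k → ℂ) r) :=
    ENNReal.toReal_pos (measure_ball_pos _ _ hr).ne' measure_ball_lt_top.ne
  have hlog2 : 0 < Real.log 2 := Real.log_pos (by norm_num)
  filter_upwards [hlim.eventually (gt_mem_nhds (mul_pos hlog2 hvol)), eventually_ge_atTop 1]
    with n hn hn1 x hx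
  have hn' : (1:ℝ) ≤ n := by exact_mod_cast hn1
  have hsub : ball x r ⊆ ball p (2 * r) := by
    intro y hy
    rw [mem_ball] at *
    have := dist_triangle y x p
    linarith
  have h1 : v n x * volume.real (ball (0 : Fin k → ℂ) r) ≤ ∫ y in ball x r, v n y := by
    refine hx_submean ((hvc n).mono hsub) (fun y hy => hK n hn1 y (hsub hy)) fun w hw => ?_
    have han : AnalyticOnNhd ℂ (fun t : ℂ => (R:ℂ) ^ n * a n (x + t • w)) (closedBall 0 1) := by
      intro t ht
      have hxt : x + t • w ∈ ball x r := by
        rw [mem_ball_zero_iff] at hw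
        rw [mem_closedBall_zero_iff] at ht
        rw [mem_ball_iff_norm, add_sub_cancel_left, norm_smul]
        calc ‖t‖ * ‖w‖ ≤ 1 * ‖w‖ := by gcongr
          _ < r := by simpa using hw
      have hl : AnalyticAt ℂ (fun t : ℂ => x + t • w) t := by fun_prop
      exact analyticAt_const.mul (AnalyticAt.fun_comp (g := a n) (f := fun t : ℂ => x + t • w)
        (ha n _ (hsub hxt)) hl)
    have := hx_posLog_le_circleAverage one_pos han
    simp only [Real.circleAverage, smul_eq_mul, zero_smul, add_zero] at this
    simp only [hvdef]
    rw [intervalIntegral.integral_const_mul, ← mul_assoc, mul_comm _ (n:ℝ)⁻¹, mul_assoc]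
    gcongr
  have h2 : ∫ y in ball x r, v n y ≤ ∫ y in ball p (2 * r), v n y := by
    refine setIntegral_mono_set ?_ ?_ hsub.eventuallyLE
    · refine IntegrableOn.of_bound hfin ((hvc n).aestronglyMeasurable measurableSet_ball) K ?_
      filter_upwards [ae_restrict_mem measurableSet_ball] with x hx using hK n hn1 x hx
    · exact Eventually.of_forall fun y => mul_nonneg (by positivity) Real.posLog_nonneg
  have h3 : v n x ≤ Real.log 2 := le_of_mul_le_mul_right ((h1.trans h2).trans hn.le) hvol
  have h4 : Real.posLog ‖(R:ℂ) ^ n * a n x‖ ≤ n * Real.log 2 := by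
    simp only [hvdef] at h3
    rwa [inv_mul_le_iff₀ (by positivity)] at h3
  have h5 : ‖(R:ℂ) ^ n * a n x‖ ≤ 2 ^ n := by
    rcases (norm_nonneg ((R:ℂ) ^ n * a n x)).eq_or_lt with h0 | h0
    · rw [← h0]; positivity
    · rw [← Real.log_le_log_iff h0 (by positivity), Real.log_pow]
      exact le_trans (by rw [Real.posLog_apply]; exact le_max_right _ _) h4
  rw [norm_mul, norm_pow, Complex.norm_real, Real.norm_of_nonneg hR0.le, hR, div_pow] at h5
  have hεn : 0 < ε ^ n := by positivity
  have h2n : (0:ℝ) < 2 ^ n := by positivity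
  rw [div_mul_eq_mul_div, div_le_iff₀ hεn] at h5
  exact le_of_mul_le_mul_left h5 h2n

end

section


theorem hx_zeros_bound {c : ℂ} {r ρ ρ₂ : ℝ} (hrρ : r < ρ) (hρ : ρ < ρ₂) (h0 : 0 < ρ)
    (T : Finset ℂ) (hT : ∀ x ∈ T, dist x c ≤ r) :
    ∀ (g : ℂ → ℂ) (M : ℝ), DifferentiableOn ℂ g (ball c ρ₂) →
      (∀ w ∈ sphere c ρ, ‖g w‖ ≤ M) → (∀ x ∈ T, g x = 0) →
      ∀ z ∈ closedBall c ρ, ‖g z‖ ≤ M * ∏ x ∈ T, (‖z - x‖ / (ρ - r)) := by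
  induction T using Finset.induction_on with
  | empty =>
    intro g M hg hM _ z hz
    simp only [Finset.prod_empty, mul_one]
    refine Complex.norm_le_of_forall_mem_frontier_norm_le (U := ball c ρ) isBounded_ball
      (DifferentiableOn.diffContOnCl ?_) ?_ ?_
    · rw [closure_ball _ h0.ne']
      exact hg.mono (closedBall_subset_ball hρ)
    · rw [frontier_ball _ h0.ne']; exact hM
    · rw [closure_ball _ h0.ne']; exact hz
  | insert x T hx ih =>
    intro g M hg hM hz0 z hz
    have hxr : dist x c ≤ r := hT x (by simp)
    have hgx : g x = 0 := hz0 x (by simp)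
    have hxn : ball c ρ₂ ∈ 𝓝 x := isOpen_ball.mem_nhds (by
      rw [mem_ball]; linarith)
    have hd := (Complex.differentiableOn_dslope (f := g) hxn).2 hg
    have key : ∀ w, (w - x) * dslope g x w = g w := fun w => by
      simpa using sub_smul_dslope_of_zero hgx w
    have hpos : 0 < ρ - r := by linarith
    have := ih (fun y hy => hT y (by simp [hy])) (dslope g x) (M / (ρ - r)) hd ?_ ?_ z hz
    · rw [← key z, norm_mul, Finset.prod_insert hx]
      calc ‖z - x‖ * ‖dslope g x z‖ ≤ ‖z - x‖ * (M / (ρ - r) * ∏ x ∈ T, (‖z - x‖ / (ρ - r))) := by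
            gcongr
        _ = _ := by ring
    · intro w hw
      have hwx : ρ - r ≤ ‖w - x‖ := by
        rw [mem_sphere] at hw
        rw [← dist_eq_norm]
        have := dist_triangle w x c
        linarith
      have := hM w hw
      rw [← key w, norm_mul] at this
      rw [le_div_iff₀ hpos]
      calc ‖dslope g x w‖ * (ρ - r) ≤ ‖dslope g x w‖ * ‖w - x‖ := by gcongr
        _ ≤ M := by rwa [mul_comm]
    · intro y hy
      have hyx : y - x ≠ 0 := sub_ne_zero.2 (fun h => hx (h ▸ hy))
      have := key y
      rw [hz0 y (by simp [hy])] at this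
      exact (mul_eq_zero.1 this).resolve_left hyx

open MeasureTheory in
theorem hx_spaced {ℓ : ℝ} (hℓ : 0 < ℓ) (d : ℕ) : ∀ S : Set ℝ, IsCompact S →
    ENNReal.ofReal (d * ℓ) < volume S →
    ∃ x : ℕ → ℝ, (∀ i ≤ d, x i ∈ S) ∧ ∀ i < d, x i + ℓ ≤ x (i + 1) := by
  induction d with
  | zero =>
    intro S _ hv
    have : S.Nonempty := by
      by_contra h
      rw [not_nonempty_iff_eq_empty] at h
      simp [h] at hv
    obtain ⟨y, hy⟩ := this
    exact ⟨fun _ => y, fun _ _ => hy, fun i hi => absurd hi (Nat.not_lt_zero i)⟩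
  | succ d ih =>
    intro S hS hv
    have hne : S.Nonempty := by
      by_contra h
      rw [not_nonempty_iff_eq_empty] at h
      simp [h] at hv
    have h0 : sInf S ∈ S := hS.sInf_mem hne
    have hcov : S ⊆ Icc (sInf S) (sInf S + ℓ) ∪ (S ∩ Ici (sInf S + ℓ)) := by
      intro y hy
      have h1 : sInf S ≤ y := csInf_le hS.bddBelow hy
      rcases le_total y (sInf S + ℓ) with h | h
      · exact Or.inl ⟨h1, h⟩
      · exact Or.inr ⟨hy, h⟩
    have hv2 : ENNReal.ofReal (d * ℓ) < volume (S ∩ Ici (sInf S + ℓ)) := by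
      by_contra hcon
      push Not at hcon
      have h2 : volume S ≤ ENNReal.ofReal ℓ + ENNReal.ofReal (d * ℓ) := by
        calc volume S ≤ _ := measure_mono hcov
          _ ≤ _ := measure_union_le _ _
          _ ≤ _ := by
            gcongr
            rw [Real.volume_Icc, add_sub_cancel_left]
      rw [← ENNReal.ofReal_add hℓ.le (by positivity)] at h2
      have h3 : ℓ + d * ℓ = ((d + 1 : ℕ) : ℝ) * ℓ := by push_cast; ring
      rw [h3] at h2
      exact absurd hv (not_lt.2 h2)
    obtain ⟨x, hx1, hx2⟩ := ih _ (hS.inter_right isClosed_Ici) hv2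
    refine ⟨fun i => Nat.casesOn i (sInf S) x, ?_, ?_⟩
    · intro i hi
      cases i with
      | zero => exact h0
      | succ i => exact (hx1 i (by omega)).1
    · intro i hi
      cases i with
      | zero => exact (hx1 0 (by omega)).2
      | succ i => exact hx2 i (by omega)

theorem hx_spaced_dist {ℓ : ℝ} {d : ℕ} {x : ℕ → ℝ}
    (hx : ∀ i < d, x i + ℓ ≤ x (i + 1)) (i : ℕ) : ∀ j, i ≤ j → j ≤ d →
    ((j:ℝ) - i) * ℓ ≤ x j - x i := by
  intro j hij
  induction j, hij using Nat.le_induction with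
  | base => intro _; simp
  | succ j hij ih =>
    intro hjd
    have h1 := ih (by omega)
    have h2 := hx j (by omega)
    push_cast
    linarith

theorem hx_spaced_abs {ℓ : ℝ} {d : ℕ} {x : ℕ → ℝ}
    (hx : ∀ i < d, x i + ℓ ≤ x (i + 1)) (i j : ℕ) (hi : i ≤ d) (hj : j ≤ d) :
    |(i:ℝ) - j| * ℓ ≤ |x i - x j| := by
  rcases le_total i j with h | h
  · have := hx_spaced_dist hx i j h hj
    have h' : (i:ℝ) ≤ j := by exact_mod_cast h
    rw [abs_sub_comm, abs_of_nonneg (by linarith : (0:ℝ) ≤ (j:ℝ) - i), abs_sub_comm]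
    exact this.trans (le_abs_self _)
  · have := hx_spaced_dist hx j i h hi
    have h' : (j:ℝ) ≤ i := by exact_mod_cast h
    rw [abs_of_nonneg (by linarith : (0:ℝ) ≤ (i:ℝ) - j)]
    exact this.trans (le_abs_self _)

theorem hx_prod_fact (i d : ℕ) (hid : i ≤ d) :
    ∏ j ∈ (Finset.range (d + 1)).erase i, |(i:ℝ) - j| = i.factorial * (d - i).factorial := by
  induction d, hid using Nat.le_induction with
  | base =>
    have : (Finset.range (i + 1)).erase i = Finset.range i := by
      ext j; simp; omega
    rw [this, ← Finset.prod_range_reflect, ← Finset.prod_range_add_one_eq_factorial]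
    simp only [Nat.sub_self, Nat.factorial_zero, Nat.cast_one, mul_one]
    push_cast
    refine Finset.prod_congr rfl fun j hj => ?_
    rw [Finset.mem_range] at hj
    have : ((i - 1 - j : ℕ) : ℝ) = i - 1 - j := by
      rw [Nat.sub_sub, Nat.cast_sub (by omega)]; push_cast; ring
    rw [this, abs_of_nonneg] <;> ring_nf
    positivity
  | succ d hid ih =>
    have : (Finset.range (d + 1 + 1)).erase i = insert (d + 1) ((Finset.range (d + 1)).erase i) := by
      ext j; simp; omega
    rw [this, Finset.prod_insert (by simp), ih]
    have h1 : d + 1 - i = (d - i) + 1 := by omega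
    rw [h1, Nat.factorial_succ]
    have h2 : ((d - i + 1 : ℕ) : ℝ) = d + 1 - i := by
      push_cast [Nat.cast_sub hid]; ring
    have h3 : |(i:ℝ) - ((d + 1 : ℕ) : ℝ)| = d + 1 - i := by
      have : (i:ℝ) ≤ d := by exact_mod_cast hid
      rw [abs_sub_comm, abs_of_nonneg] <;> push_cast <;> linarith
    rw [h3]
    push_cast
    push_cast at h2
    rw [h2]; ring

theorem hx_pow_div_fact (m : ℕ) :
    ((m + 1 : ℝ)) ^ m / m.factorial ≤ Real.exp 1 * Real.exp 1 ^ m := by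
  have h2 := Real.pow_div_factorial_le_exp (x := (m + 1 : ℝ)) (by positivity) (m + 1)
  calc ((m + 1 : ℝ)) ^ m / m.factorial = (m + 1 : ℝ) ^ (m + 1) / (m + 1).factorial := by
        rw [Nat.factorial_succ]; push_cast; field_simp; ring
    _ ≤ _ := h2
    _ = Real.exp 1 * Real.exp 1 ^ m := by
        rw [← Real.exp_nat_mul, ← Real.exp_add]; congr 1; ring

theorem hx_lagrange_bound {r L m : ℝ} {d : ℕ} {x : ℕ → ℝ} (hr : 0 < r) (hm : 0 ≤ m)
    (hx : ∀ i < d, x i + r / (d + 1) ≤ x (i + 1)) (y : ℕ → ℂ) (hy : ∀ i ≤ d, ‖y i‖ ≤ m)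
    (z : ℂ) (hz : ∀ i ≤ d, ‖z - x i‖ ≤ L) :
    ‖∑ i ∈ Finset.range (d + 1), y i * ∏ j ∈ (Finset.range (d + 1)).erase i,
      ((z - x j) / ((x i : ℂ) - x j))‖
      ≤ m * (Real.exp 1 * (2 * Real.exp 1 * L / r) ^ d) := by
  set ℓ : ℝ := r / (d + 1) with hℓ
  have hℓ0 : 0 < ℓ := by positivity
  have hL : 0 ≤ L := (norm_nonneg _).trans (hz 0 (Nat.zero_le _))
  have hterm : ∀ i ∈ Finset.range (d + 1), ‖y i * ∏ j ∈ (Finset.range (d + 1)).erase i,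
      ((z - x j) / ((x i : ℂ) - x j))‖ ≤ m * (L / ℓ) ^ d / d.factorial * (d.choose i) := by
    intro i hi
    have hid : i ≤ d := by rw [Finset.mem_range] at hi; omega
    have hcard : ((Finset.range (d + 1)).erase i).card = d := by
      rw [Finset.card_erase_of_mem hi]; simp
    have hp : ‖∏ j ∈ (Finset.range (d + 1)).erase i, ((z - x j) / ((x i : ℂ) - x j))‖
        ≤ (L / ℓ) ^ d / (i.factorial * (d - i).factorial) := by
      have hpw : (L / ℓ) ^ d = ∏ _j ∈ (Finset.range (d + 1)).erase i, (L / ℓ) := by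
        rw [Finset.prod_const, hcard]
      rw [norm_prod, ← hx_prod_fact i d hid, hpw, ← Finset.prod_div_distrib]
      refine Finset.prod_le_prod (fun _ _ => norm_nonneg _) fun j hj => ?_
      have hjd : j ≤ d := by
        have := Finset.mem_of_mem_erase hj
        rw [Finset.mem_range] at this; omega
      have hne : (i:ℝ) - j ≠ 0 := by
        have := Finset.ne_of_mem_erase hj
        rw [sub_ne_zero]; exact_mod_cast this.symm
      have habs : 0 < |(i:ℝ) - j| := abs_pos.2 hne
      have hsp := hx_spaced_abs hx i j hid hjd
      have hnorm : ‖(x i : ℂ) - x j‖ = |x i - x j| := by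
        rw [← Complex.ofReal_sub, Complex.norm_real, Real.norm_eq_abs]
      rw [norm_div, hnorm, div_div]
      have h0 : 0 < ℓ * |(i:ℝ) - j| := by positivity
      have := hz j hjd
      gcongr
      rwa [mul_comm]
    rw [norm_mul]
    have hch : ((d.choose i : ℕ) : ℝ) = d.factorial / (i.factorial * (d - i).factorial) :=
      Nat.cast_choose ℝ hid
    calc _ ≤ m * ((L / ℓ) ^ d / (i.factorial * (d - i).factorial)) := by
          gcongr; exact hy i hid
      _ = _ := by
          rw [hch]
          have : (d.factorial : ℝ) ≠ 0 := by positivity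
          field_simp
  calc _ ≤ ∑ i ∈ Finset.range (d + 1), m * (L / ℓ) ^ d / d.factorial * (d.choose i) :=
        norm_sum_le_of_le _ hterm
    _ = m * (L / ℓ) ^ d / d.factorial * 2 ^ d := by
        rw [← Finset.mul_sum]
        congr 1
        exact_mod_cast Nat.sum_range_choose d
    _ = m * (2 * L / r) ^ d * ((d + 1 : ℝ) ^ d / d.factorial) := by
        rw [hℓ]
        have : L / (r / (d + 1)) = L / r * (d + 1) := by field_simp
        rw [this, mul_pow, mul_div_assoc 2, mul_pow 2]
        ring
    _ ≤ m * (2 * L / r) ^ d * (Real.exp 1 * Real.exp 1 ^ d) := by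
        gcongr; exact hx_pow_div_fact d
    _ = _ := by
        have : 2 * Real.exp 1 * L / r = 2 * L / r * Real.exp 1 := by ring
        rw [this, mul_pow]; ring

open MeasureTheory in
theorem hx_two_const {c r ρ ρ₂ M m t : ℝ} (hr : 0 < r) (hrρ : r < ρ) (hρ : ρ < ρ₂) (hm : 0 ≤ m)
    (hq : t + r ≤ ρ - r)
    {h : ℂ → ℂ} (hd : DifferentiableOn ℂ h (ball (c:ℂ) ρ₂))
    (hM : ∀ w ∈ closedBall (c:ℂ) ρ, ‖h w‖ ≤ M)
    {S : Set ℝ} (hS : IsCompact S) (hSr : S ⊆ Icc (c - r) (c + r))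
    (hv : ENNReal.ofReal r ≤ volume S) (hSm : ∀ x ∈ S, ‖h x‖ ≤ m)
    {z : ℂ} (hz : ‖z - c‖ ≤ t) (d : ℕ) :
    ‖h z‖ ≤ M * ((t + r) / (ρ - r)) ^ (d + 1)
      + 2 * (m * (Real.exp 1 * (2 * Real.exp 1 * (ρ + r) / r) ^ d)) := by
  have hd1 : (0:ℝ) < d + 1 := by positivity
  have ht : 0 ≤ t := (norm_nonneg _).trans hz
  obtain ⟨x, hx1, hx2⟩ := hx_spaced (ℓ := r / (d + 1)) (by positivity) d S hS (by
    refine lt_of_lt_of_le ?_ hv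
    rw [ENNReal.ofReal_lt_ofReal_iff hr, mul_div_assoc', div_lt_iff₀ hd1]
    nlinarith)
  have hxr : ∀ i ≤ d, ‖(x i : ℂ) - c‖ ≤ r := by
    intro i hi
    have := hSr (hx1 i hi)
    rw [← Complex.ofReal_sub, Complex.norm_real, Real.norm_eq_abs, abs_le]
    constructor <;> linarith [this.1, this.2]
  have hinj : ∀ i ≤ d, ∀ j ≤ d, i ≠ j → (x i : ℂ) - x j ≠ 0 := by
    intro i hi j hj hij
    have h1 := hx_spaced_abs hx2 i j hi hj
    have h2 : 0 < |(i:ℝ) - j| := abs_pos.2 (sub_ne_zero.2 (by exact_mod_cast hij))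
    have h3 : 0 < |x i - x j| := lt_of_lt_of_le (by positivity) h1
    rw [← Complex.ofReal_sub]
    exact_mod_cast abs_pos.1 h3
  set P : ℂ → ℂ := fun z => ∑ i ∈ Finset.range (d + 1), h (x i) *
    ∏ j ∈ (Finset.range (d + 1)).erase i, ((z - x j) / ((x i : ℂ) - x j)) with hP
  set Q : ℝ := m * (Real.exp 1 * (2 * Real.exp 1 * (ρ + r) / r) ^ d) with hQ
  have hPb : ∀ w ∈ closedBall (c:ℂ) ρ, ‖P w‖ ≤ Q := by
    intro w hw
    refine hx_lagrange_bound hr hm hx2 (fun i => h (x i)) (fun i hi => hSm _ (hx1 i hi)) w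
      fun i hi => ?_
    rw [mem_closedBall, dist_eq_norm] at hw
    calc ‖w - x i‖ = ‖(w - c) - (x i - c)‖ := by congr 1; ring
      _ ≤ ‖w - c‖ + ‖(x i : ℂ) - c‖ := norm_sub_le _ _
      _ ≤ ρ + r := add_le_add hw (hxr i hi)
  have hPd : Differentiable ℂ P := by
    simp only [hP]
    fun_prop
  have hPx : ∀ i ≤ d, P (x i) = h (x i) := by
    intro i hi
    simp only [hP]
    have him : i ∈ Finset.range (d + 1) := by rw [Finset.mem_range]; omega
    rw [Finset.sum_eq_single_of_mem i him]
    · rw [Finset.prod_eq_one, mul_one]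
      intro j hj
      refine div_self (hinj i hi j ?_ (Finset.ne_of_mem_erase hj).symm)
      have := Finset.mem_of_mem_erase hj
      rw [Finset.mem_range] at this; omega
    · intro b hb hbi
      rw [Finset.prod_eq_zero (i := i) (Finset.mem_erase.2 ⟨hbi.symm, him⟩) (by simp), mul_zero]
  classical
  set T : Finset ℂ := (Finset.range (d + 1)).image (fun i => (x i : ℂ)) with hT
  have hTc : T.card = d + 1 := by
    rw [hT, Finset.card_image_of_injOn, Finset.card_range]
    intro i hi j hj hij
    by_contra hne
    simp only [Finset.coe_range, Set.mem_Iio] at hi hj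
    exact hinj i (by omega) j (by omega) hne (sub_eq_zero.2 hij)
  have hTm : ∀ w ∈ T, ∃ i ≤ d, w = x i := by
    intro w hw
    rw [hT, Finset.mem_image] at hw
    obtain ⟨i, hi, rfl⟩ := hw
    exact ⟨i, by rw [Finset.mem_range] at hi; omega, rfl⟩
  have hQ0 : 0 ≤ Q := (norm_nonneg _).trans (hPb c (by simp; linarith))
  have hM0 : 0 ≤ M := (norm_nonneg _).trans (hM c (by simp; linarith))
  have hzρ : z ∈ closedBall (c:ℂ) ρ := by
    rw [mem_closedBall, dist_eq_norm]; linarith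
  have hpos : 0 < ρ - r := by linarith
  have key := hx_zeros_bound hrρ hρ (by linarith) T
    (fun w hw => by
      obtain ⟨i, hi, rfl⟩ := hTm w hw
      rw [dist_eq_norm]; exact hxr i hi)
    (fun w => h w - P w) (M + Q) (hd.sub hPd.differentiableOn)
    (fun w hw => (norm_sub_le _ _).trans (add_le_add (hM w (sphere_subset_closedBall hw))
      (hPb w (sphere_subset_closedBall hw))))
    (fun w hw => by
      obtain ⟨i, hi, rfl⟩ := hTm w hw
      simp [hPx i hi]) z hzρ
  have hprod : ∏ x ∈ T, (‖z - x‖ / (ρ - r)) ≤ ((t + r) / (ρ - r)) ^ (d + 1) := by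
    rw [← hTc, ← Finset.prod_const]
    refine Finset.prod_le_prod (fun _ _ => by positivity) fun w hw => ?_
    obtain ⟨i, hi, rfl⟩ := hTm w hw
    gcongr
    calc ‖z - x i‖ = ‖(z - c) - (x i - c)‖ := by congr 1; ring
      _ ≤ ‖z - c‖ + ‖(x i : ℂ) - c‖ := norm_sub_le _ _
      _ ≤ t + r := add_le_add hz (hxr i hi)
  set q := ((t + r) / (ρ - r)) ^ (d + 1) with hqdef
  have hq1 : q ≤ 1 := pow_le_one₀ (by positivity) ((div_le_one hpos).2 hq)
  have hfin : ‖h z - P z‖ ≤ (M + Q) * q := key.trans (by gcongr)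
  have : ‖h z‖ ≤ ‖h z - P z‖ + ‖P z‖ := by
    simpa using norm_add_le (h z - P z) (P z)
  have h5 := hPb z hzρ
  nlinarith [mul_le_mul_of_nonneg_left hq1 hQ0]

open MeasureTheory in
theorem hx_one_dim {c β : ℝ} {a : ℕ → ℂ → ℂ}
    (hd : ∀ n, DifferentiableOn ℂ (a n) (ball (c:ℂ) β))
    (hb : ∀ ρ < β, ∃ C M : ℝ, 0 ≤ C ∧ 0 ≤ M ∧
      ∀ n, ∀ w ∈ closedBall (c:ℂ) ρ, ‖a n w‖ ≤ C * M ^ n)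
    (hp : ∀ x : ℝ, (x:ℂ) ∈ ball (c:ℂ) β → ∀ ε > (0:ℝ), ∀ᶠ n in atTop, ‖a n x‖ ≤ ε ^ n)
    {z : ℂ} (hz : z ∈ ball (c:ℂ) β) {ε : ℝ} (hε : 0 < ε) :
    ∀ᶠ n in atTop, ‖a n z‖ ≤ ε ^ n := by
  rw [mem_ball, dist_eq_norm] at hz
  set t := ‖z - c‖ with ht
  have ht0 : 0 ≤ t := norm_nonneg _
  obtain ⟨ρ, htρ, hρβ⟩ := exists_between hz
  set r := (ρ - t) / 4 with hr
  have hr0 : 0 < r := by rw [hr]; linarith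
  have hq : t + r < ρ - r := by rw [hr]; linarith
  have hrρ : r < ρ := by linarith
  obtain ⟨C, M, hC, hM, hCM⟩ := hb ρ hρβ
  set q := (t + r) / (ρ - r) with hqdef
  have hq0 : 0 ≤ q := div_nonneg (by linarith) (by linarith)
  have hq1 : q < 1 := (div_lt_one (by linarith)).2 hq
  set K := 2 * Real.exp 1 * (ρ + r) / r with hK
  have hK0 : 0 < K := by
    have := Real.exp_pos 1
    have : 0 < ρ + r := by linarith
    positivity
  obtain ⟨D, hD⟩ : ∃ D : ℕ, M * q ^ D ≤ ε / 2 := by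
    have : Tendsto (fun D : ℕ => M * q ^ D) atTop (𝓝 (M * 0)) :=
      (tendsto_pow_atTop_nhds_zero_of_lt_one hq0 hq1).const_mul M
    rw [mul_zero] at this
    exact ((this.eventually (gt_mem_nhds (half_pos hε))).exists).imp fun _ h => h.le
  set η := ε / 2 / K ^ D with hη
  have hη0 : 0 < η := by positivity
  have hηK : η * K ^ D = ε / 2 := by rw [hη]; field_simp
  have hIcc : ∀ x ∈ Icc (c - r) (c + r), (x:ℂ) ∈ ball (c:ℂ) β := by
    intro x hx
    rw [mem_ball, dist_eq_norm, ← Complex.ofReal_sub, Complex.norm_real, Real.norm_eq_abs, abs_lt]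
    constructor <;> linarith [hx.1, hx.2]
  set S : ℕ → Set ℝ := fun N => {x ∈ Icc (c - r) (c + r) | ∀ n ≥ N, ‖a n x‖ ≤ η ^ n} with hS
  have hSc : ∀ N, IsCompact (S N) := by
    intro N
    have hcl : IsClosed (S N) := by
      have : S N = Icc (c - r) (c + r) ∩
          ⋂ n, ⋂ (_ : n ≥ N), (Icc (c - r) (c + r) ∩ {x | ‖a n (x:ℂ)‖ ≤ η ^ n}) := by
        ext x
        simp only [hS, mem_sep_iff, mem_inter_iff, mem_iInter, mem_setOf_eq]
        constructor
        · rintro ⟨h1, h2⟩; exact ⟨h1, fun n hn => ⟨h1, h2 n hn⟩⟩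
        · rintro ⟨h1, h2⟩; exact ⟨h1, fun n hn => (h2 n hn).2⟩
      rw [this]
      refine isClosed_Icc.inter (isClosed_iInter fun n => isClosed_iInter fun _ => ?_)
      have hcont : ContinuousOn (fun x : ℝ => ‖a n (x:ℂ)‖) (Icc (c - r) (c + r)) :=
        ((hd n).continuousOn.comp Complex.continuous_ofReal.continuousOn hIcc).norm
      exact hcont.preimage_isClosed_of_isClosed isClosed_Icc isClosed_Iic
    exact isCompact_Icc.of_isClosed_subset hcl (fun x hx => hx.1)
  have hSmono : Monotone S := by
    intro N N' hNN x hx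
    exact ⟨hx.1, fun n hn => hx.2 n (le_trans hNN hn)⟩
  have hSU : ⋃ N, S N = Icc (c - r) (c + r) := by
    ext x
    simp only [mem_iUnion]
    constructor
    · rintro ⟨N, hx⟩; exact hx.1
    · intro hx
      obtain ⟨N, hN⟩ := eventually_atTop.1 (hp x (hIcc x hx) η hη0)
      exact ⟨N, hx, hN⟩
  obtain ⟨N, hN⟩ : ∃ N, ENNReal.ofReal r ≤ volume (S N) := by
    have h1 := tendsto_measure_iUnion_atTop (μ := volume) hSmono
    rw [hSU, Real.volume_Icc] at h1
    have h2 : ENNReal.ofReal r < ENNReal.ofReal (c + r - (c - r)) := by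
      rw [ENNReal.ofReal_lt_ofReal_iff (by linarith)]; linarith
    exact ((h1.eventually (lt_mem_nhds h2)).exists).imp fun _ h => h.le
  have hsmall : ∀ᶠ n : ℕ in atTop, (C + 2 * Real.exp 1) * (1 / 2 : ℝ) ^ n ≤ 1 := by
    have : Tendsto (fun n : ℕ => (C + 2 * Real.exp 1) * (1 / 2 : ℝ) ^ n) atTop
        (𝓝 ((C + 2 * Real.exp 1) * 0)) :=
      (tendsto_pow_atTop_nhds_zero_of_lt_one (by norm_num) (by norm_num)).const_mul _
    rw [mul_zero] at this
    exact (this.eventually (gt_mem_nhds one_pos)).mono fun _ h => h.le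
  filter_upwards [eventually_ge_atTop N, hsmall] with n hn hsm
  have key := hx_two_const (c := c) (m := η ^ n) (M := C * M ^ n) hr0 hrρ hρβ (by positivity) hq.le
    (hd n) (hCM n) (hSc N) (fun x hx => hx.1) hN (fun x hx => hx.2 n hn) (z := z) le_rfl (D * n)
  have e1 : C * M ^ n * q ^ (D * n + 1) ≤ C * (ε / 2) ^ n := by
    calc C * M ^ n * q ^ (D * n + 1) = C * (M * q ^ D) ^ n * q := by
          rw [pow_succ, pow_mul, mul_pow]; ring
      _ ≤ C * (ε / 2) ^ n * 1 := by
          have : 0 ≤ M * q ^ D := by positivity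
          gcongr
      _ = _ := mul_one _
  have e2 : 2 * (η ^ n * (Real.exp 1 * K ^ (D * n))) = 2 * Real.exp 1 * (ε / 2) ^ n := by
    rw [← hηK, mul_pow, pow_mul]; ring
  calc ‖a n z‖ ≤ _ := key
    _ ≤ C * (ε / 2) ^ n + 2 * Real.exp 1 * (ε / 2) ^ n := add_le_add e1 e2.le
    _ = (C + 2 * Real.exp 1) * (1 / 2) ^ n * ε ^ n := by
        rw [div_eq_mul_one_div ε, mul_pow]; ring
    _ ≤ 1 * ε ^ n := by gcongr
    _ = _ := one_mul _

end

/-- Taylor coefficients of `f (z, ·)` at `0`. -/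
noncomputable def hxCoeff {k : ℕ} (f : (Fin k → ℂ) × ℂ → ℂ) (n : ℕ) (z : Fin k → ℂ) : ℂ :=
  ((n.factorial : ℂ))⁻¹ * iteratedFDeriv ℂ n f (z, 0) (fun _ => (0, 1))

theorem hx_coeff_eq {k : ℕ} {x0 : Fin k → ℂ} {β : ℝ} {f : (Fin k → ℂ) × ℂ → ℂ}
    (hf : AnalyticOnNhd ℂ f (ball x0 β ×ˢ ball (0 : ℂ) 1)) (n : ℕ) {z : Fin k → ℂ}
    (hz : z ∈ ball x0 β) :
    hxCoeff f n z = ((n.factorial : ℂ))⁻¹ * iteratedDeriv n (fun s => f (z, s)) 0 := by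
  have h := hx_iteratedDeriv_line (isOpen_ball.prod isOpen_ball) hf (z, 0) (0, 1) n 0
    (by simpa using hz)
  have e : (fun t : ℂ => f ((z, (0:ℂ)) + t • ((0 : Fin k → ℂ), (1:ℂ)))) = fun s => f (z, s) := by
    funext t; simp
  rw [e] at h
  rw [hxCoeff, h]
  simp

theorem hx_coeff_analytic {k : ℕ} {x0 : Fin k → ℂ} {β : ℝ} {f : (Fin k → ℂ) × ℂ → ℂ}
    (hf : AnalyticOnNhd ℂ f (ball x0 β ×ˢ ball (0 : ℂ) 1)) (n : ℕ) :
    AnalyticOnNhd ℂ (hxCoeff f n) (ball x0 β) := by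
  intro z hz
  have h1 : AnalyticAt ℂ (iteratedFDeriv ℂ n f) (z, 0) :=
    (hf.iteratedFDeriv n) (z, 0) (by simpa using hz)
  have h2 : AnalyticAt ℂ (fun z : Fin k → ℂ => (z, (0:ℂ))) z :=
    analyticAt_id.prod analyticAt_const
  have h3 : AnalyticAt ℂ (fun z : Fin k → ℂ => iteratedFDeriv ℂ n f (z, (0:ℂ))) z :=
    AnalyticAt.fun_comp (f := fun z : Fin k → ℂ => (z, (0:ℂ))) h1 h2
  have h4 := AnalyticAt.fun_comp (f := fun z : Fin k → ℂ => iteratedFDeriv ℂ n f (z, (0:ℂ)))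
    (ContinuousLinearMap.analyticAt (ContinuousMultilinearMap.apply ℂ
    (fun _ : Fin n => (Fin k → ℂ) × ℂ) ℂ (fun _ => (0, 1))) (iteratedFDeriv ℂ n f (z, 0))) h3
  exact analyticAt_const.mul h4

theorem hx_slice_diff {k : ℕ} {x0 : Fin k → ℂ} {β : ℝ} {f : (Fin k → ℂ) × ℂ → ℂ}
    (hf : AnalyticOnNhd ℂ f (ball x0 β ×ˢ ball (0 : ℂ) 1)) {z : Fin k → ℂ}
    (hz : z ∈ ball x0 β) : DifferentiableOn ℂ (fun s => f (z, s)) (ball 0 1) := by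
  intro s hs
  have h2 : AnalyticAt ℂ (fun s : ℂ => (z, s)) s := analyticAt_const.prod analyticAt_id
  exact (AnalyticAt.fun_comp (f := fun s : ℂ => (z, s)) (hf (z, s) ⟨hz, hs⟩)
    h2).differentiableAt.differentiableWithinAt

theorem hx_cauchy {g : ℂ → ℂ} {R C : ℝ} (hR : 0 < R) (hg : DifferentiableOn ℂ g (closedBall 0 R))
    (hC : ∀ s ∈ sphere (0:ℂ) R, ‖g s‖ ≤ C) (n : ℕ) :
    ‖((n.factorial : ℂ))⁻¹ * iteratedDeriv n g 0‖ ≤ C * (1 / R) ^ n := by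
  have h := Complex.norm_iteratedDeriv_le_of_forall_mem_sphere_norm_le n hR
    (hg.diffContOnCl_ball le_rfl) hC
  rw [norm_mul, norm_inv, Complex.norm_natCast]
  have hn : (0:ℝ) < n.factorial := by exact_mod_cast n.factorial_pos
  rw [inv_mul_le_iff₀ hn]
  calc _ ≤ _ := h
    _ = _ := by rw [one_div, inv_pow]; field_simp

theorem hx_coeff_bound {k : ℕ} {x0 : Fin k → ℂ} {β : ℝ} {f : (Fin k → ℂ) × ℂ → ℂ}
    (hf : AnalyticOnNhd ℂ f (ball x0 β ×ˢ ball (0 : ℂ) 1)) {ρ : ℝ} (hρ : ρ < β) :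
    ∃ C : ℝ, 0 ≤ C ∧ ∀ n, ∀ z ∈ closedBall x0 ρ, ‖hxCoeff f n z‖ ≤ C * 2 ^ n := by
  have hsub : closedBall x0 ρ ×ˢ closedBall (0:ℂ) (1/2) ⊆ ball x0 β ×ˢ ball (0 : ℂ) 1 :=
    prod_mono (closedBall_subset_ball hρ) (closedBall_subset_ball (by norm_num))
  obtain ⟨C, hC⟩ := ((isCompact_closedBall x0 ρ).prod
    (isCompact_closedBall (0:ℂ) (1/2))).exists_bound_of_continuousOn (hf.continuousOn.mono hsub)
  refine ⟨max C 0, le_max_right _ _, fun n z hz => ?_⟩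
  have hzB := closedBall_subset_ball hρ hz
  rw [hx_coeff_eq hf n hzB]
  have := hx_cauchy (g := fun s => f (z, s)) (R := 1/2) (C := max C 0) (by norm_num)
    ((hx_slice_diff hf hzB).mono (closedBall_subset_ball (by norm_num)))
    (fun s hs => (hC (z, s) ⟨hz, sphere_subset_closedBall hs⟩).trans (le_max_left _ _)) n
  norm_num at this ⊢
  exact this

theorem hx_eventually_geom (C ε : ℝ) (hε : 0 < ε) :
    ∀ᶠ n : ℕ in atTop, C * (ε / 2) ^ n ≤ ε ^ n := by
  have h := (tendsto_pow_atTop_nhds_zero_of_lt_one (r := (1/2:ℝ)) (by norm_num)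
    (by norm_num)).const_mul C
  rw [mul_zero] at h
  filter_upwards [h.eventually (gt_mem_nhds (zero_lt_one))] with n hn
  have : C * (ε / 2) ^ n = (C * (1/2) ^ n) * ε ^ n := by
    rw [div_eq_mul_one_div, mul_pow]; ring
  rw [this]
  have := pow_pos hε n
  nlinarith

theorem hx_coeff_real {k : ℕ} {x0 : Fin k → ℂ} {β : ℝ} {f : (Fin k → ℂ) × ℂ → ℂ}
    (hf : AnalyticOnNhd ℂ f (ball x0 β ×ˢ ball (0 : ℂ) 1)) {x : Fin k → ℂ}
    (hx : x ∈ ball x0 β) {g : ℂ → ℂ} (hg : AnalyticOnNhd ℂ g univ)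
    (hgf : ∀ s ∈ ball (0:ℂ) 1, g s = f (x, s)) {ε : ℝ} (hε : 0 < ε) :
    ∀ᶠ n in atTop, ‖hxCoeff f n x‖ ≤ ε ^ n := by
  obtain ⟨C, hC⟩ := (isCompact_sphere (0:ℂ) (2/ε)).exists_bound_of_continuousOn
    (hg.continuousOn.mono (subset_univ _))
  filter_upwards [hx_eventually_geom C ε hε] with n hn
  have he : (fun s => f (x, s)) =ᶠ[𝓝 0] g := by
    filter_upwards [ball_mem_nhds (0:ℂ) one_pos] with s hs
    exact (hgf s hs).symm
  rw [hx_coeff_eq hf n hx, he.iteratedDeriv_eq n]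
  have := hx_cauchy (R := 2/ε) (by positivity) (hg.differentiableOn.mono (subset_univ _)) hC n
  rw [one_div_div] at this
  exact this.trans hn

theorem hx_update_mem {k : ℕ} {x0 z : Fin k → ℂ} {ρ : ℝ} (hz : z ∈ closedBall x0 ρ) (i : Fin k)
    {w : ℂ} (hw : w ∈ closedBall (x0 i) ρ) : Function.update z i w ∈ closedBall x0 ρ := by
  have hρ : 0 ≤ ρ := dist_nonneg.trans hz
  rw [mem_closedBall, dist_pi_le_iff hρ] at *
  intro j
  by_cases h : j = i
  · subst h; simpa using hw
  · simpa [h] using hz j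

theorem hx_coeff_all {k : ℕ} {x0 : Fin k → ℂ} (hx0 : ∀ j, (x0 j).im = 0) {β : ℝ}
    {f : (Fin k → ℂ) × ℂ → ℂ}
    (hf : AnalyticOnNhd ℂ f (ball x0 β ×ˢ ball (0 : ℂ) 1))
    (hext : ∀ x ∈ ball x0 β, (∀ j, (x j).im = 0) →
      ∃ g : ℂ → ℂ, AnalyticOnNhd ℂ g univ ∧ ∀ s ∈ ball (0 : ℂ) 1, g s = f (x, s))
    (S : Finset (Fin k)) : ∀ z ∈ ball x0 β, (∀ j, j ∉ S → (z j).im = 0) →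
      ∀ ε > (0:ℝ), ∀ᶠ n in atTop, ‖hxCoeff f n z‖ ≤ ε ^ n := by
  induction S using Finset.induction_on with
  | empty =>
    intro z hz hr ε hε
    obtain ⟨g, hg, hgf⟩ := hext z hz (fun j => hr j (by simp))
    exact hx_coeff_real hf hz hg hgf hε
  | insert i S hi ih =>
    intro z hz hr ε hε
    have hc : ((x0 i).re : ℂ) = x0 i := by
      apply Complex.ext <;> simp [hx0 i]
    have hmem : ∀ w ∈ ball (x0 i) β, Function.update z i w ∈ ball x0 β := by
      intro w hw
      have := hx_update_mem (x0 := x0) (z := z) (ρ := max (dist z x0) (dist w (x0 i)))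
        (mem_closedBall.2 (le_max_left _ _)) i (mem_closedBall.2 (le_max_right _ _))
      exact closedBall_subset_ball (max_lt hz hw) this
    have hzi : z i ∈ ball (x0 i) β := lt_of_le_of_lt (dist_le_pi_dist z x0 i) hz
    have key := hx_one_dim (c := (x0 i).re) (β := β)
      (a := fun n w => hxCoeff f n (Function.update z i w)) (z := z i) (ε := ε)
      (by
        rw [hc]
        intro n w hw
        have h1 := ((hx_coeff_analytic hf n) _ (hmem w hw)).differentiableAt
        have h2 : DifferentiableAt ℂ (fun w => Function.update z i w) w :=
          (hasDerivAt_update z i w).differentiableAt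
        exact (DifferentiableAt.comp w h1 h2).differentiableWithinAt)
      (by
        rw [hc]
        intro ρ hρ
        obtain ⟨C, hC, hCb⟩ := hx_coeff_bound hf (ρ := max ρ (dist z x0)) (max_lt hρ hz)
        refine ⟨C, 2, hC, by norm_num, fun n w hw => hCb n _ ?_⟩
        exact hx_update_mem (mem_closedBall.2 (le_max_right _ _)) i
          (closedBall_subset_closedBall (le_max_left _ _) hw))
      (by
        rw [hc]
        intro x hx ε hε
        refine ih _ (hmem _ hx) (fun j hj => ?_) ε hε
        by_cases h : j = i
        · subst h; simp
        · simpa [h] using hr j (by simp [h, hj]))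
      (by rw [hc]; exact hzi) hε
    simpa using key

theorem hx_main {k : ℕ} {x0 : Fin k → ℂ} (hx0 : ∀ j, (x0 j).im = 0) {β : ℝ}
    {f : (Fin k → ℂ) × ℂ → ℂ}
    (hf : AnalyticOnNhd ℂ f (ball x0 β ×ˢ ball (0 : ℂ) 1))
    (hext : ∀ x ∈ ball x0 β, (∀ j, (x j).im = 0) →
      ∃ g : ℂ → ℂ, AnalyticOnNhd ℂ g univ ∧ ∀ s ∈ ball (0 : ℂ) 1, g s = f (x, s)) :
    ∃ F : (Fin k → ℂ) × ℂ → ℂ, AnalyticOnNhd ℂ F (ball x0 β ×ˢ (univ : Set ℂ)) ∧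
      ∀ z ∈ ball x0 β, ∀ s ∈ ball (0 : ℂ) 1, F (z, s) = f (z, s) := by
  refine ⟨fun q => ∑' n, hxCoeff f n q.1 * q.2 ^ n, ?_, ?_⟩
  · rintro ⟨p, s0⟩ ⟨hp, -⟩
    simp only at hp
    have hd : dist p x0 < β := hp
    set r : ℝ := min 1 ((β - dist p x0) / 4) with hr
    have hr0 : 0 < r := lt_min one_pos (by linarith)
    have hr1 : r ≤ 1 := min_le_left _ _
    have hr4 : r ≤ (β - dist p x0) / 4 := min_le_right _ _
    obtain ⟨C, hC0, hC⟩ := hx_coeff_bound hf (ρ := dist p x0 + 2 * r) (by linarith)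
    have hsubc : ball p (2 * r) ⊆ closedBall x0 (dist p x0 + 2 * r) := by
      intro x hx
      have h1 := dist_triangle x p x0
      have h2 : dist x p < 2 * r := hx
      rw [mem_closedBall]; linarith
    have hsub : ball p (2 * r) ⊆ ball x0 β :=
      hsubc.trans (closedBall_subset_ball (by linarith))
    set T : ℝ := ‖s0‖ + 1 with hT
    have hT0 : 0 < T := by positivity
    have hun := hx_unif_of_pointwise (a := hxCoeff f) hr0 (M := 2) (by norm_num) hC0
      (fun n => (hx_coeff_analytic hf n).mono hsub) (fun n x hx => hC n x (hsubc hx))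
      (fun x hx => hx_coeff_all hx0 hf hext Finset.univ x (hsub hx) (by simp))
      (ε := 1 / (2 * T)) (by positivity)
    obtain ⟨N, hN⟩ := eventually_atTop.1 hun
    have hsum : Summable (fun n : ℕ => if n < N then C * 2 ^ n * T ^ n else (1/2:ℝ) ^ n) := by
      refine (summable_nat_add_iff N).1 ?_
      have := (summable_nat_add_iff N).2 (summable_geometric_two)
      refine this.congr fun n => ?_
      rw [if_neg (by omega)]
    have hfin := hx_analyticAt_tsum (E := (Fin k → ℂ) × ℂ)
      (A := fun n q => hxCoeff f n q.1 * q.2 ^ n) (p := (p, s0)) hr0 hsum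
    refine hfin ?_ ?_
    · rintro n ⟨x, s⟩ hq
      rw [← ball_prod_same] at hq
      have hx : x ∈ ball x0 β := hsub (ball_subset_ball (by linarith) hq.1)
      have h1 : AnalyticAt ℂ (fun q : (Fin k → ℂ) × ℂ => hxCoeff f n q.1) (x, s) :=
        AnalyticAt.fun_comp (f := fun q : (Fin k → ℂ) × ℂ => q.1) (hx_coeff_analytic hf n x hx)
          analyticAt_fst
      exact h1.mul (analyticAt_snd.pow n)
    · rintro n ⟨x, s⟩ hq
      rw [← ball_prod_same] at hq
      have hx : x ∈ ball p r := hq.1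
      have hs : ‖s‖ ≤ T := by
        have h1 : dist s s0 < r := hq.2
        rw [dist_eq_norm] at h1
        have := norm_le_norm_add_norm_sub' s s0
        linarith
      have hsn : ‖s‖ ^ n ≤ T ^ n := pow_le_pow_left₀ (norm_nonneg _) hs n
      simp only [norm_mul, norm_pow]
      split_ifs with hn
      · have := hC n x (hsubc (ball_subset_ball (by linarith) hx))
        gcongr
      · have := hN n (by omega) x hx
        calc _ ≤ (1 / (2 * T)) ^ n * T ^ n := by gcongr
          _ = (1/2) ^ n := by
            rw [← mul_pow]; congr 1; field_simp
  · intro z hz s hs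
    have h := Complex.hasSum_taylorSeries_on_ball (hx_slice_diff hf hz) hs
    rw [← h.tsum_eq]
    refine tsum_congr fun n => ?_
    simp only [hx_coeff_eq hf n hz, sub_zero, smul_eq_mul]
    ring

end HartogsHelpers

/-- Hartogs-type extension over the real slice in finite dimensions: if `f` is analytic
on `B × 𝔻` (a ball in `Fin k → ℂ` centered at a real point times the unit disk) and all
slices `f(x, ·)` over real points `x ∈ B` extend to entire functions, then `f` extends
analytically to `B × ℂ`. -/
theorem hartogs_extension_over_real_slice
    (k : ℕ) (hk : 0 < k)
    (x0 : Fin k → ℂ) (hx0 : ∀ j, (x0 j).im = 0)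
    (β : ℝ) (hβ : 0 < β)
    (f : (Fin k → ℂ) × ℂ → ℂ)
    (hf : AnalyticOnNhd ℂ f (Metric.ball x0 β ×ˢ Metric.ball (0 : ℂ) 1))
    (hext : ∀ x ∈ Metric.ball x0 β, (∀ j, (x j).im = 0) →
      ∃ g : ℂ → ℂ, AnalyticOnNhd ℂ g Set.univ ∧
        ∀ s ∈ Metric.ball (0 : ℂ) 1, g s = f (x, s)) :
    ∃ F : (Fin k → ℂ) × ℂ → ℂ,
      AnalyticOnNhd ℂ F (Metric.ball x0 β ×ˢ (Set.univ : Set ℂ)) ∧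
      ∀ z ∈ Metric.ball x0 β, ∀ s ∈ Metric.ball (0 : ℂ) 1, F (z, s) = f (z, s) := by
  exact hx_main hx0 hf hext
end
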